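/- arXiv:2307.15300 — 16 statements merged into one kernel-verified Lean document; each statement's English description precedes it below -/
import Mathlib

section
/- Both the numerator and the denominator in the formula for the threshold k are strictly positive: δ1δ3(1+η) − (δ3+ηδ1)γ2 − a0(δ1−δ3)γ2 > 0 and (1+η)(δ1δ3 + γ2) − (δ3+ηδ1)γ2 − (δ1+ηδ3) − a1(γ2−1)(δ1−δ3) > 0. -/
theorem stmt_2 (μ1 μ2 ρ σ lam0 lam1 η a0 a1 m δ1 δ3 γ2 : ℝ)
    (hσ : 0 < σ) (hlam0 : 0 < lam0) (hlam1 : 0 < lam1)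
    (hμ1 : μ1 < ρ) (hμ2 : μ2 < ρ)
    (hm : m = 1 + (μ1 - μ2) / σ)
    (hη : η = lam0 / lam1) (ha0 : a0 = lam0 / (ρ + lam0 - μ1)) (ha1 : a1 = lam0 / (ρ + lam0 - μ2))
    (hδ1 : δ1 = (m - Real.sqrt (m ^ 2 + 4 * (ρ - μ1) / σ)) / 2)
    (hδ3 : δ3 = (m - Real.sqrt (m ^ 2 + 4 * (ρ + lam0 + lam1 - μ1) / σ)) / 2)
    (hγ2 : γ2 = (m + Real.sqrt (m ^ 2 + 4 * (ρ + lam0 - μ1) / σ)) / 2) :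
    δ1 * δ3 * (1 + η) - (δ3 + η * δ1) * γ2 - a0 * (δ1 - δ3) * γ2 > 0 ∧
      (1 + η) * (δ1 * δ3 + γ2) - (δ3 + η * δ1) * γ2 - (δ1 + η * δ3) - a1 * (γ2 - 1) * (δ1 - δ3) > 0 := by
  have hA : 0 < (ρ - μ1) / σ := div_pos (by linarith) hσ
  have hB : 0 < (ρ + lam0 - μ2) / σ := div_pos (by linarith) hσ
  have e1 : 4 * (ρ - μ1) / σ = 4 * ((ρ - μ1) / σ) := by ring
  have hd1 : δ1 < 0 := by
    have : m < Real.sqrt (m ^ 2 + 4 * (ρ - μ1) / σ) := by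
      apply Real.lt_sqrt_of_sq_lt
      linarith
    linarith
  have hd31 : δ3 < δ1 := by
    have : Real.sqrt (m ^ 2 + 4 * (ρ - μ1) / σ)
        < Real.sqrt (m ^ 2 + 4 * (ρ + lam0 + lam1 - μ1) / σ) := by
      apply Real.sqrt_lt_sqrt
      · have := sq_nonneg m
        linarith
      · have : 4 * (ρ - μ1) / σ < 4 * (ρ + lam0 + lam1 - μ1) / σ :=
          div_lt_div_of_pos_right (by linarith) hσ
        linarith
    linarith
  have hg : 1 < γ2 := by
    have : 2 - m < Real.sqrt (m ^ 2 + 4 * (ρ + lam0 - μ1) / σ) := by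
      apply Real.lt_sqrt_of_sq_lt
      have h : m ^ 2 + 4 * (ρ + lam0 - μ1) / σ - (2 - m) ^ 2
          = 4 * ((ρ + lam0 - μ2) / σ) := by
        rw [hm]; field_simp; ring
      linarith
    linarith
  have hη0 : 0 < η := hη ▸ div_pos hlam0 hlam1
  have ha0p : 0 < a0 := ha0 ▸ div_pos hlam0 (by linarith)
  have ha1p : 0 < a1 := ha1 ▸ div_pos hlam0 (by linarith)
  have ha0l : a0 < 1 := by rw [ha0, div_lt_one (by linarith)]; linarith
  have ha1l : a1 < 1 := by rw [ha1, div_lt_one (by linarith)]; linarith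
  clear hη ha0 ha1 hδ1 hδ3 hγ2 hm e1 hA hB
  have hd3 : δ3 < 0 := hd31.trans hd1
  constructor
  · obtain ⟨x, rfl⟩ : ∃ x, δ1 = -x := ⟨-δ1, by ring⟩
    obtain ⟨y, rfl⟩ : ∃ y, δ3 = -y := ⟨-δ3, by ring⟩
    obtain ⟨b, rfl⟩ : ∃ b, a0 = 1 - b := ⟨1 - a0, by ring⟩
    have hx : 0 < x := by linarith
    have hy : 0 < y := by linarith
    have hb : 0 < b := by linarith
    have : 0 < x * y * (1 + η) + γ2 * (y * b + (η + (1 - b)) * x) := by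
      have hγ : 0 < γ2 := by linarith
      positivity
    linarith
  · obtain ⟨x, rfl⟩ : ∃ x, δ1 = 1 - x := ⟨1 - δ1, by ring⟩
    obtain ⟨y, rfl⟩ : ∃ y, δ3 = 1 - y := ⟨1 - δ3, by ring⟩
    obtain ⟨G, rfl⟩ : ∃ G, γ2 = G + 1 := ⟨γ2 - 1, by ring⟩
    have hx : 0 < x := by linarith
    have hy : 0 < y := by linarith
    have hG : 0 < G := by linarith
    have hb : 0 < 1 - a1 := by linarith
    have h1 : 0 < G * y * (1 - a1) := by positivity
    have h2 : 0 < x * y * (1 + η) + η * G * x + a1 * G * x := by positivity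
    linarith
end

section
/- The threshold k = [δ1δ3(1+η) − (δ3+ηδ1)γ2 − a0(δ1−δ3)γ2] / [(1+η)(δ1δ3+γ2) − (δ3+ηδ1)γ2 − (δ1+ηδ3) − a1(γ2−1)(δ1−δ3)] · (β_s/β_b) is strictly positive. -/
theorem stmt_3 (μ1 μ2 ρ σ lam0 lam1 K βs βb η a0 a1 m δ1 δ3 γ2 k : ℝ)
    (hσ : 0 < σ) (hlam0 : 0 < lam0) (hlam1 : 0 < lam1)
    (hμ1 : μ1 < ρ) (hμ2 : μ2 < ρ)
    (hm : m = 1 + (μ1 - μ2) / σ)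
    (hK0 : 0 < K) (hK1 : K < 1) (hβs : βs = 1 - K) (hβb : βb = 1 + K)
    (hη : η = lam0 / lam1) (ha0 : a0 = lam0 / (ρ + lam0 - μ1)) (ha1 : a1 = lam0 / (ρ + lam0 - μ2))
    (hδ1 : δ1 = (m - Real.sqrt (m ^ 2 + 4 * (ρ - μ1) / σ)) / 2)
    (hδ3 : δ3 = (m - Real.sqrt (m ^ 2 + 4 * (ρ + lam0 + lam1 - μ1) / σ)) / 2)
    (hγ2 : γ2 = (m + Real.sqrt (m ^ 2 + 4 * (ρ + lam0 - μ1) / σ)) / 2)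
    (hk : k = (δ1 * δ3 * (1 + η) - (δ3 + η * δ1) * γ2 - a0 * (δ1 - δ3) * γ2) /
      ((1 + η) * (δ1 * δ3 + γ2) - (δ3 + η * δ1) * γ2 - (δ1 + η * δ3) - a1 * (γ2 - 1) * (δ1 - δ3)) *
      (βs / βb)) :
    0 < k := by
  have hx : δ1 < 0 := by
    have : m < Real.sqrt (m ^ 2 + 4 * (ρ - μ1) / σ) := by
      apply Real.lt_sqrt_of_sq_lt
      have : 0 < 4 * (ρ - μ1) / σ := div_pos (by linarith) hσ
      linarith
    linarith
  have hxy : δ3 < δ1 := by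
    have : Real.sqrt (m ^ 2 + 4 * (ρ - μ1) / σ) <
        Real.sqrt (m ^ 2 + 4 * (ρ + lam0 + lam1 - μ1) / σ) := by
      have h0 : 0 < 4 * (ρ - μ1) / σ := div_pos (by linarith) hσ
      have h1 : 4 * (ρ - μ1) / σ < 4 * (ρ + lam0 + lam1 - μ1) / σ :=
        div_lt_div_of_pos_right (by linarith) hσ
      apply Real.sqrt_lt_sqrt
      · nlinarith [sq_nonneg m]
      · linarith
    linarith
  have hg : 1 < γ2 := by
    have : 2 - m < Real.sqrt (m ^ 2 + 4 * (ρ + lam0 - μ1) / σ) := by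
      apply Real.lt_sqrt_of_sq_lt
      have h1 : 0 < 4 * (ρ + lam0 - μ2) / σ := div_pos (by linarith) hσ
      have h2 : 4 * (ρ + lam0 - μ1) / σ = 4 * (ρ + lam0 - μ2) / σ - 4 * (m - 1) := by
        rw [hm]; field_simp; ring
      rw [h2]
      nlinarith
    linarith
  have hη0 : 0 < η := hη ▸ div_pos hlam0 hlam1
  have ha0' : a0 < 1 := by
    rw [ha0, div_lt_one (by linarith)]; linarith
  have ha1' : a1 < 1 := by
    rw [ha1, div_lt_one (by linarith)]; linarith
  clear hη ha0 ha1 hδ1 hδ3 hγ2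
  obtain ⟨x, rfl⟩ : ∃ x, δ1 = -x := ⟨-δ1, by ring⟩
  obtain ⟨d, rfl⟩ : ∃ d, δ3 = -x - d := ⟨-x - δ3, by ring⟩
  obtain ⟨g, rfl⟩ : ∃ g, γ2 = 1 + g := ⟨γ2 - 1, by ring⟩
  obtain ⟨p, rfl⟩ : ∃ p, a0 = 1 - p := ⟨1 - a0, by ring⟩
  obtain ⟨q, rfl⟩ : ∃ q, a1 = 1 - q := ⟨1 - a1, by ring⟩
  have hx : 0 < x := by linarith
  have hd : 0 < d := by linarith
  have hg : 0 < g := by linarith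
  have hp : 0 < p := by linarith
  have hq : 0 < q := by linarith
  rw [hk]
  apply mul_pos
  · apply div_pos
    · ring_nf; positivity
    · ring_nf; positivity
  · exact div_pos (by linarith) (by linarith)
end

section
/- (Lemma 3.1) The constants C1 = (−δ3 β_s + (δ3−1) β_b k)/((δ1−δ3) k^{δ1}), C3 = (δ1 β_s − (δ1−1) β_b k)/((δ1−δ3) k^{δ3}), and C2 = [(1−a0)(η+a1)(1−δ1)(−δ3) + (1−a1)(η+a0)(1−δ3)δ1] β_s / ({(1+η)(δ1δ3+γ2) − δ1[(a1+η)γ2 + (1−a1)] − δ3[(a1+η) + γ2(1−a1)]} k^{γ2}) are all strictly positive. -/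
/-- The smaller root of `x² - m x = r`. -/
lemma root_minus (m r : ℝ) (hr : 0 < r) (x : ℝ)
    (hx : x = (m - Real.sqrt (m ^ 2 + r)) / 2) : x * (x - m) = r / 4 ∧ x < 0 := by
  have h0 : 0 ≤ m ^ 2 + r := by positivity
  have h1 := Real.sq_sqrt h0
  have h2 : m < Real.sqrt (m ^ 2 + r) := Real.lt_sqrt_of_sq_lt (by linarith)
  constructor
  · subst hx; linear_combination h1 / 4
  · linarith

/-- The larger root of `x² - m x = r`. -/
lemma root_plus (m r : ℝ) (hr : 0 < r) (x : ℝ)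
    (hx : x = (m + Real.sqrt (m ^ 2 + r)) / 2) : x * (x - m) = r / 4 ∧ 0 < x ∧ m < x := by
  have h0 : 0 ≤ m ^ 2 + r := by positivity
  have h1 := Real.sq_sqrt h0
  have h2 : m < Real.sqrt (m ^ 2 + r) := Real.lt_sqrt_of_sq_lt (by linarith)
  have h3 : -m < Real.sqrt (m ^ 2 + r) := Real.lt_sqrt_of_sq_lt (by linarith [neg_sq m])
  refine ⟨?_, ?_, ?_⟩
  · subst hx; linear_combination h1 / 4
  · linarith
  · linarith

/-- The key inequality. -/
lemma key (d m g : ℝ) (hd : 0 < d) (hg : 0 < g) (hgm : 0 < g - m) (hgm1 : 0 < g - m + 1) :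
    0 < d * (d + 1) * ((d + m) / (g - m) - (d + m - 1) / (g - m + 1)) := by
  have : (d + m) / (g - m) - (d + m - 1) / (g - m + 1) = (d + g) / ((g - m) * (g - m + 1)) := by
    field_simp; ring
  rw [this]; positivity

theorem stmt_4 (μ1 μ2 ρ σ lam0 lam1 K βs βb η a0 a1 m δ1 δ3 γ2 k C1 C2 C3 : ℝ)
    (hσ : 0 < σ) (hlam0 : 0 < lam0) (hlam1 : 0 < lam1)
    (hμ1 : μ1 < ρ) (hμ2 : μ2 < ρ)
    (hm : m = 1 + (μ1 - μ2) / σ)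
    (hK0 : 0 < K) (hK1 : K < 1) (hβs : βs = 1 - K) (hβb : βb = 1 + K)
    (hη : η = lam0 / lam1) (ha0 : a0 = lam0 / (ρ + lam0 - μ1)) (ha1 : a1 = lam0 / (ρ + lam0 - μ2))
    (hδ1 : δ1 = (m - Real.sqrt (m ^ 2 + 4 * (ρ - μ1) / σ)) / 2)
    (hδ3 : δ3 = (m - Real.sqrt (m ^ 2 + 4 * (ρ + lam0 + lam1 - μ1) / σ)) / 2)
    (hγ2 : γ2 = (m + Real.sqrt (m ^ 2 + 4 * (ρ + lam0 - μ1) / σ)) / 2)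
    (hk : k = (δ1 * δ3 * (1 + η) - (δ3 + η * δ1) * γ2 - a0 * (δ1 - δ3) * γ2) /
      ((1 + η) * (δ1 * δ3 + γ2) - (δ3 + η * δ1) * γ2 - (δ1 + η * δ3) - a1 * (γ2 - 1) * (δ1 - δ3)) *
      (βs / βb))
    (hC1 : C1 = (-δ3 * βs + (δ3 - 1) * βb * k) / ((δ1 - δ3) * k ^ δ1))
    (hC3 : C3 = (δ1 * βs - (δ1 - 1) * βb * k) / ((δ1 - δ3) * k ^ δ3))
    (hC2 : C2 = ((1 - a0) * (η + a1) * (1 - δ1) * (-δ3) + (1 - a1) * (η + a0) * (1 - δ3) * δ1) * βs /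
      (((1 + η) * (δ1 * δ3 + γ2) - δ1 * ((a1 + η) * γ2 + (1 - a1)) - δ3 * ((a1 + η) + γ2 * (1 - a1))) *
        k ^ γ2)) :
    0 < C1 ∧ 0 < C2 ∧ 0 < C3 := by
  have hd1r := root_minus m (4 * (ρ - μ1) / σ) (div_pos (by linarith) hσ) δ1 hδ1
  have hd3r := root_minus m (4 * (ρ + lam0 + lam1 - μ1) / σ) (div_pos (by linarith) hσ) δ3 hδ3
  have hgr := root_plus m (4 * (ρ + lam0 - μ1) / σ) (div_pos (by linarith) hσ) γ2 hγ2
  have hlt : δ3 < δ1 := by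
    have : Real.sqrt (m ^ 2 + 4 * (ρ - μ1) / σ)
        < Real.sqrt (m ^ 2 + 4 * (ρ + lam0 + lam1 - μ1) / σ) := by
      apply Real.sqrt_lt_sqrt
      · have : 0 < 4 * (ρ - μ1) / σ := div_pos (by linarith) hσ
        positivity
      · have : 4 * (ρ - μ1) / σ < 4 * (ρ + lam0 + lam1 - μ1) / σ :=
          div_lt_div_of_pos_right (by linarith) hσ
        linarith
    rw [hδ1, hδ3]; linarith
  clear hδ1 hδ3 hγ2
  obtain ⟨e1, n1⟩ := hd1r
  obtain ⟨e3, n3⟩ := hd3r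
  obtain ⟨eg, pg, pgm⟩ := hgr
  obtain ⟨d1, rfl⟩ : ∃ d, δ1 = -d := ⟨-δ1, by ring⟩
  obtain ⟨d3, rfl⟩ : ∃ d, δ3 = -d := ⟨-δ3, by ring⟩
  have p1 : 0 < d1 := by linarith
  have p3 : 0 < d3 := by linarith
  have p31 : 0 < d3 - d1 := by linarith
  have hσ0 : σ ≠ 0 := hσ.ne'
  have em : σ * m = σ + μ1 - μ2 := by rw [hm]; field_simp; ring
  have E1 : ρ - μ1 = σ * (d1 * (d1 + m)) := by
    have : d1 * (d1 + m) = (ρ - μ1) / σ := by linear_combination e1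
    rw [this]; field_simp
  have E3 : ρ + lam0 + lam1 - μ1 = σ * (d3 * (d3 + m)) := by
    have : d3 * (d3 + m) = (ρ + lam0 + lam1 - μ1) / σ := by linear_combination e3
    rw [this]; field_simp
  have Eg : ρ + lam0 - μ1 = σ * (γ2 * (γ2 - m)) := by
    have : γ2 * (γ2 - m) = (ρ + lam0 - μ1) / σ := by linear_combination eg
    rw [this]; field_simp
  have F1 : ρ - μ2 = σ * ((d1 + 1) * (d1 + m - 1)) := by linear_combination E1 - em
  have F3 : ρ + lam0 + lam1 - μ2 = σ * ((d3 + 1) * (d3 + m - 1)) := by linear_combination E3 - em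
  have Fg : ρ + lam0 - μ2 = σ * ((γ2 - 1) * (γ2 - m + 1)) := by linear_combination Eg - em
  have q0 : 0 < γ2 - m := by linarith
  have q1 : 0 < γ2 - m + 1 := by linarith
  have g1 : 0 < γ2 - 1 := by
    have : 0 < σ * ((γ2 - 1) * (γ2 - m + 1)) := by rw [← Fg]; linarith
    exact pos_of_mul_pos_left (pos_of_mul_pos_right this hσ.le) q1.le
  have b1 : 0 < d1 + m := by
    have : 0 < σ * (d1 * (d1 + m)) := by rw [← E1]; linarith
    exact pos_of_mul_pos_right (pos_of_mul_pos_right this hσ.le) p1.le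
  have hA0 : 0 < ρ + lam0 - μ1 := by linarith
  have hA1 : 0 < ρ + lam0 - μ2 := by linarith
  have hη0 : 0 < η := by rw [hη]; positivity
  have pa0 : 0 < a0 := by rw [ha0]; positivity
  have pa1 : 0 < a1 := by rw [ha1]; positivity
  have f0 : 1 - a0 = d1 * (d1 + m) / (γ2 * (γ2 - m)) := by
    have : 1 - a0 = (ρ - μ1) / (ρ + lam0 - μ1) := by rw [ha0]; field_simp; ring
    rw [this, E1, Eg, mul_div_mul_left _ _ hσ0]
  have f1 : 1 - a1 = (d1 + 1) * (d1 + m - 1) / ((γ2 - 1) * (γ2 - m + 1)) := by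
    have : 1 - a1 = (ρ - μ2) / (ρ + lam0 - μ2) := by rw [ha1]; field_simp; ring
    rw [this, F1, Fg, mul_div_mul_left _ _ hσ0]
  have h0 : η + a0 = η * (d3 * (d3 + m) / (γ2 * (γ2 - m))) := by
    have : η + a0 = η * ((ρ + lam0 + lam1 - μ1) / (ρ + lam0 - μ1)) := by
      rw [ha0, hη]; field_simp; ring
    rw [this, E3, Eg, mul_div_mul_left _ _ hσ0]
  have h1 : η + a1 = η * ((d3 + 1) * (d3 + m - 1) / ((γ2 - 1) * (γ2 - m + 1))) := by
    have : η + a1 = η * ((ρ + lam0 + lam1 - μ2) / (ρ + lam0 - μ2)) := by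
      rw [ha1, hη]; field_simp; ring
    rw [this, F3, Fg, mul_div_mul_left _ _ hσ0]
  have c0 : 0 < 1 - a0 := by rw [f0]; positivity
  have c1 : 0 < 1 - a1 := by
    have : 1 - a1 = (ρ - μ2) / (ρ + lam0 - μ2) := by rw [ha1]; field_simp; ring
    rw [this]; exact div_pos (by linarith) hA1
  have pβs : 0 < βs := by linarith
  have pβb : 0 < βb := by linarith
  have K1 : 0 < γ2 * (1 - a0) * (1 + d1) - (γ2 - 1) * d1 * (1 - a1) := by
    have h := key d1 m γ2 p1 pg q0 q1
    have e : γ2 * (1 - a0) * (1 + d1) - (γ2 - 1) * d1 * (1 - a1)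
        = d1 * (d1 + 1) * ((d1 + m) / (γ2 - m) - (d1 + m - 1) / (γ2 - m + 1)) := by
      rw [f0, f1]; field_simp; ring
    rw [e]; exact h
  have K3 : 0 < γ2 * (η + a0) * (1 + d3) - (γ2 - 1) * d3 * (η + a1) := by
    have h := mul_pos hη0 (key d3 m γ2 p3 pg q0 q1)
    have e : γ2 * (η + a0) * (1 + d3) - (γ2 - 1) * d3 * (η + a1)
        = η * (d3 * (d3 + 1) * ((d3 + m) / (γ2 - m) - (d3 + m - 1) / (γ2 - m + 1))) := by
      rw [h0, h1]; field_simp; ring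
    rw [e]; exact h
  have K2 : 0 < (1 - a0) * (η + a1) * (1 + d1) * d3 - (1 - a1) * (η + a0) * (1 + d3) * d1 := by
    have : (1 - a0) * (η + a1) * (1 + d1) * d3 - (1 - a1) * (η + a0) * (1 + d3) * d1
        = η * d1 * d3 * (1 + d1) * (1 + d3) * (d3 - d1)
          / (γ2 * (γ2 - m) * ((γ2 - 1) * (γ2 - m + 1))) := by
      rw [f0, f1, h0, h1]; field_simp; ring
    rw [this]; positivity
  obtain ⟨N, hN⟩ : ∃ N, N = -d1 * -d3 * (1 + η) - (-d3 + η * -d1) * γ2 - a0 * (-d1 - -d3) * γ2 :=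
    ⟨_, rfl⟩
  obtain ⟨D, hD⟩ : ∃ D, D = (1 + η) * (-d1 * -d3 + γ2) - (-d3 + η * -d1) * γ2 - (-d1 + η * -d3)
      - a1 * (γ2 - 1) * (-d1 - -d3) := ⟨_, rfl⟩
  have hD' : (1 + η) * (-d1 * -d3 + γ2) - -d1 * ((a1 + η) * γ2 + (1 - a1))
      - -d3 * ((a1 + η) + γ2 * (1 - a1)) = D := by rw [hD]; ring
  rw [← hN, ← hD] at hk
  rw [hD'] at hC2
  have pN : 0 < N := by
    have : N = d1 * d3 * (1 + η) + γ2 * (d3 * (1 - a0) + d1 * (η + a0)) := by rw [hN]; ring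
    rw [this]; positivity
  have pD : 0 < D := by
    have : D = (1 + η) * (d1 * d3 + γ2) + d1 * ((a1 + η) * γ2 + (1 - a1))
      + d3 * ((a1 + η) + γ2 * (1 - a1)) := by rw [hD]; ring
    rw [this]; positivity
  have pk : 0 < k := by rw [hk]; positivity
  have hβk : βb * k = βs * N / D := by rw [hk]; field_simp
  have L3 : 0 < (1 + d1) * N - d1 * D := by
    have : (1 + d1) * N - d1 * D
        = (d3 - d1) * (γ2 * (1 - a0) * (1 + d1) - (γ2 - 1) * d1 * (1 - a1)) := by
      rw [hN, hD]; ring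
    rw [this]; positivity
  have L1 : 0 < d3 * D - (1 + d3) * N := by
    have : d3 * D - (1 + d3) * N
        = (d3 - d1) * (γ2 * (η + a0) * (1 + d3) - (γ2 - 1) * d3 * (η + a1)) := by
      rw [hN, hD]; ring
    rw [this]; positivity
  have pd : 0 < -d1 - -d3 := by linarith
  refine ⟨?_, ?_, ?_⟩
  · rw [hC1]
    apply div_pos _ (mul_pos pd (Real.rpow_pos_of_pos pk _))
    have : - -d3 * βs + (-d3 - 1) * βb * k = βs * (d3 * D - (1 + d3) * N) / D := by
      rw [mul_assoc, hβk]; field_simp; ring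
    rw [this]; positivity
  · rw [hC2]
    apply div_pos _ (mul_pos pD (Real.rpow_pos_of_pos pk _))
    apply mul_pos _ pβs
    linarith [K2]
  · rw [hC3]
    apply div_pos _ (mul_pos pd (Real.rpow_pos_of_pos pk _))
    have : -d1 * βs - (-d1 - 1) * βb * k = βs * ((1 + d1) * N - d1 * D) / D := by
      rw [mul_assoc, hβk]; field_simp; ring
    rw [this]; positivity
end

section
/- The threshold k satisfies the strict lower bound k > (−δ1/(1−δ1)) · (β_s/β_b). -/
theorem stmt_5 (μ1 μ2 ρ σ lam0 lam1 K βs βb η a0 a1 m δ1 δ3 γ2 k : ℝ)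
    (hσ : 0 < σ) (hlam0 : 0 < lam0) (hlam1 : 0 < lam1)
    (hμ1 : μ1 < ρ) (hμ2 : μ2 < ρ)
    (hm : m = 1 + (μ1 - μ2) / σ)
    (hK0 : 0 < K) (hK1 : K < 1) (hβs : βs = 1 - K) (hβb : βb = 1 + K)
    (hη : η = lam0 / lam1) (ha0 : a0 = lam0 / (ρ + lam0 - μ1)) (ha1 : a1 = lam0 / (ρ + lam0 - μ2))
    (hδ1 : δ1 = (m - Real.sqrt (m ^ 2 + 4 * (ρ - μ1) / σ)) / 2)
    (hδ3 : δ3 = (m - Real.sqrt (m ^ 2 + 4 * (ρ + lam0 + lam1 - μ1) / σ)) / 2)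
    (hγ2 : γ2 = (m + Real.sqrt (m ^ 2 + 4 * (ρ + lam0 - μ1) / σ)) / 2)
    (hk : k = (δ1 * δ3 * (1 + η) - (δ3 + η * δ1) * γ2 - a0 * (δ1 - δ3) * γ2) /
      ((1 + η) * (δ1 * δ3 + γ2) - (δ3 + η * δ1) * γ2 - (δ1 + η * δ3) - a1 * (γ2 - 1) * (δ1 - δ3)) *
      (βs / βb)) :
    k > -δ1 / (1 - δ1) * (βs / βb) := by
  have hσ' : σ ≠ 0 := hσ.ne'
  have hA : 0 < (ρ - μ1) / σ := div_pos (by linarith) hσ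
  have hL0 : 0 < lam0 / σ := div_pos hlam0 hσ
  have hL1 : 0 < lam1 / σ := div_pos hlam1 hσ
  have hB : 0 < (ρ - μ2) / σ := div_pos (by linarith) hσ
  obtain ⟨A, hAd⟩ : ∃ A, A = (ρ - μ1) / σ := ⟨_, rfl⟩
  obtain ⟨L, hLd⟩ : ∃ L, L = lam0 / σ := ⟨_, rfl⟩
  obtain ⟨M, hMd⟩ : ∃ M, M = lam1 / σ := ⟨_, rfl⟩
  have hBe : (ρ - μ2) / σ = A + m - 1 := by rw [hAd, hm]; field_simp; ring
  have e1 : m ^ 2 + 4 * (ρ - μ1) / σ = m ^ 2 + 4 * A := by rw [hAd]; ring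
  have e3 : m ^ 2 + 4 * (ρ + lam0 + lam1 - μ1) / σ = m ^ 2 + 4 * (A + L + M) := by
    rw [hAd, hLd, hMd]; ring
  have e2 : m ^ 2 + 4 * (ρ + lam0 - μ1) / σ = m ^ 2 + 4 * (A + L) := by
    rw [hAd, hLd]; ring
  have ea0 : a0 = L / (A + L) := by
    have : ρ + lam0 - μ1 ≠ 0 := by linarith
    have h2 : A + L = (ρ + lam0 - μ1) / σ := by rw [hAd, hLd]; ring
    rw [ha0, h2, hLd]; field_simp
  have ea1 : a1 = L / (A + m - 1 + L) := by
    have : ρ + lam0 - μ2 ≠ 0 := by linarith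
    have h2 : A + m - 1 + L = (ρ + lam0 - μ2) / σ := by rw [← hBe, hLd]; ring
    rw [ha1, h2, hLd]; field_simp
  rw [← hAd] at hA
  rw [← hLd] at hL0
  rw [← hMd] at hL1
  rw [hBe] at hB
  rw [e1] at hδ1
  rw [e3] at hδ3
  rw [e2] at hγ2
  have hm2 := sq_nonneg m
  have s1 := Real.sq_sqrt (show 0 ≤ m ^ 2 + 4 * A by linarith)
  have s2 := Real.sq_sqrt (show 0 ≤ m ^ 2 + 4 * (A + L) by linarith)
  have n1 := Real.sqrt_nonneg (m ^ 2 + 4 * A)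
  have n2 := Real.sqrt_nonneg (m ^ 2 + 4 * (A + L))
  have l12 : √(m ^ 2 + 4 * A) < √(m ^ 2 + 4 * (A + L)) :=
    Real.sqrt_lt_sqrt (by linarith) (by linarith)
  have l23 : √(m ^ 2 + 4 * (A + L)) < √(m ^ 2 + 4 * (A + L + M)) :=
    Real.sqrt_lt_sqrt (by linarith) (by linarith)
  have habs : |m| < √(m ^ 2 + 4 * A) := by
    rw [← Real.sqrt_sq_eq_abs]
    exact Real.sqrt_lt_sqrt hm2 (by linarith)
  have hab := abs_lt.1 habs
  obtain ⟨x, hx⟩ : ∃ x, x = -δ1 := ⟨_, rfl⟩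
  obtain ⟨y, hy⟩ : ∃ y, y = -δ3 := ⟨_, rfl⟩
  obtain ⟨p, hp⟩ : ∃ p, p = x + m := ⟨_, rfl⟩
  obtain ⟨u, hu⟩ : ∃ u, u = γ2 - p := ⟨_, rfl⟩
  have hx0 : 0 < x := by rw [hx, hδ1]; linarith [hab.2]
  have hxy : x < y := by rw [hx, hy, hδ1, hδ3]; linarith
  have hu0 : 0 < u := by rw [hu, hp, hx, hδ1, hγ2]; linarith
  have hAx : A = x * p := by rw [hp, hx, hδ1]; linear_combination (-1 / 4) * s1
  have hALx : A + L = γ2 * (u + x) := by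
    rw [hu, hp, hγ2]; linear_combination (-1 / 4) * s2
  have hp1 : 1 < p := by
    have : 0 < (1 + x) * (p - 1) := by
      have : (1 + x) * (p - 1) = A + m - 1 := by rw [hAx, hp]; ring
      linarith
    have := (pos_iff_pos_of_mul_pos this).1 (by linarith)
    linarith
  have hg : γ2 = p + u := by linarith
  have hmm : m = p - x := by linarith
  have hLx : L = (γ2 + x) * u := by
    have : L = γ2 * (u + x) - x * p := by linarith
    rw [this, hg]; ring
  have hd1 : δ1 = -x := by linarith
  have hd3 : δ3 = -y := by linarith
  have hη0 : 0 < η := by rw [hη]; positivity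
  have ha0' : a0 * γ2 = (γ2 + x) * u / (u + x) := by
    have : 0 < γ2 := by linarith
    rw [ea0, hALx, hLx]; field_simp
  have ha1' : a1 * (γ2 - 1) = (γ2 + x) * u / (u + x + 1) := by
    have h1 : 0 < γ2 - 1 := by linarith
    have h2 : A + m - 1 + L = (γ2 - 1) * (u + x + 1) := by
      have : A + m - 1 + L = γ2 * (u + x) + (p - x) - 1 := by linarith
      rw [this, hg]; ring
    have h3 : 0 < u + x + 1 := by linarith
    rw [ea1, h2, hLx]; field_simp
  have hF : x + γ2 - a0 * γ2 * (1 + x) + a1 * (γ2 - 1) * x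
      = (γ2 + x) * x * (x + 1) / ((u + x) * (u + x + 1)) := by
    have h3 : 0 < u + x + 1 := by linarith
    rw [ha0', ha1']; field_simp; ring
  have hg0 : 0 < γ2 := by linarith
  have hFpos : 0 < x + γ2 - a0 * γ2 * (1 + x) + a1 * (γ2 - 1) * x := by
    rw [hF]; positivity
  have ha1lt : a1 < 1 := by
    rw [ea1, div_lt_one (by linarith)]; linarith
  have hy0 : 0 < y := by linarith
  have hD : 0 < (1 + η) * (δ1 * δ3 + γ2) - (δ3 + η * δ1) * γ2 - (δ1 + η * δ3)
      - a1 * (γ2 - 1) * (δ1 - δ3) := by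
    have h1 : 0 < (1 - a1) * ((γ2 - 1) * (y - x)) :=
      mul_pos (by linarith) (mul_pos (by linarith) (by linarith))
    have h2 : 0 < (1 + η) * (x * y + γ2) + η * x * γ2 + η * y + y + x * γ2 := by positivity
    rw [hd1, hd3]
    have h3 := add_pos h1 h2
    refine lt_of_lt_of_eq h3 ?_
    ring
  rw [gt_iff_lt, hk]
  have hβ : 0 < βs / βb := by
    rw [hβs, hβb]; exact div_pos (by linarith) (by linarith)
  apply mul_lt_mul_of_pos_right _ hβ
  rw [div_lt_div_iff₀ (by linarith) hD, ← sub_pos]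
  have := mul_pos (sub_pos.2 hxy) hFpos
  refine lt_of_lt_of_eq this ?_
  rw [hd1, hd3]; ring
end

section
/- The threshold k satisfies the strict upper bound k < (−δ3/(1−δ3)) · (β_s/β_b). -/
theorem stmt_6 (μ1 μ2 ρ σ lam0 lam1 K βs βb η a0 a1 m δ1 δ3 γ2 k : ℝ)
    (hσ : 0 < σ) (hlam0 : 0 < lam0) (hlam1 : 0 < lam1)
    (hμ1 : μ1 < ρ) (hμ2 : μ2 < ρ)
    (hm : m = 1 + (μ1 - μ2) / σ)
    (hK0 : 0 < K) (hK1 : K < 1) (hβs : βs = 1 - K) (hβb : βb = 1 + K)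
    (hη : η = lam0 / lam1) (ha0 : a0 = lam0 / (ρ + lam0 - μ1)) (ha1 : a1 = lam0 / (ρ + lam0 - μ2))
    (hδ1 : δ1 = (m - Real.sqrt (m ^ 2 + 4 * (ρ - μ1) / σ)) / 2)
    (hδ3 : δ3 = (m - Real.sqrt (m ^ 2 + 4 * (ρ + lam0 + lam1 - μ1) / σ)) / 2)
    (hγ2 : γ2 = (m + Real.sqrt (m ^ 2 + 4 * (ρ + lam0 - μ1) / σ)) / 2)
    (hk : k = (δ1 * δ3 * (1 + η) - (δ3 + η * δ1) * γ2 - a0 * (δ1 - δ3) * γ2) /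
      ((1 + η) * (δ1 * δ3 + γ2) - (δ3 + η * δ1) * γ2 - (δ1 + η * δ3) - a1 * (γ2 - 1) * (δ1 - δ3)) *
      (βs / βb)) :
    k < -δ3 / (1 - δ3) * (βs / βb) := by
  have hβ : 0 < βs / βb := by
    rw [hβs, hβb]; apply div_pos <;> linarith
  have hηp : 0 < η := by rw [hη]; positivity
  have hA : 0 < ρ + lam0 - μ1 := by linarith
  have hB : 0 < ρ + lam0 - μ2 := by linarith
  have ha0p : 0 < a0 := by rw [ha0]; positivity
  have ha1p : 0 < a1 := by rw [ha1]; positivity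
  have ha1l : a1 < 1 := by rw [ha1, div_lt_one hB]; linarith
  have h1p : 0 < 4 * (ρ - μ1) / σ := by
    apply div_pos _ hσ; linarith
  have h13 : 4 * (ρ - μ1) / σ < 4 * (ρ + lam0 + lam1 - μ1) / σ := by
    apply div_lt_div_of_pos_right _ hσ; linarith
  have hs13 := Real.sqrt_lt_sqrt (by positivity) (add_lt_add_right h13 (m ^ 2))
  have hx : δ1 < 0 := by
    have : m < Real.sqrt (m ^ 2 + 4 * (ρ - μ1) / σ) := by
      apply Real.lt_sqrt_of_sq_lt; linarith
    linarith
  have hxy : δ3 < δ1 := by linarith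
  have hσm : σ * m = σ + μ1 - μ2 := by rw [hm]; field_simp; ring
  -- gamma2
  have hgq : σ * (γ2 ^ 2 - m * γ2) = ρ + lam0 - μ1 := by
    have h0 : 0 ≤ m ^ 2 + 4 * (ρ + lam0 - μ1) / σ := by positivity
    have hs := Real.sq_sqrt h0
    have e : γ2 ^ 2 - m * γ2 = (ρ + lam0 - μ1) / σ := by
      rw [hγ2]; linear_combination hs / 4
    rw [e]; field_simp
  have hg1 : 1 < γ2 := by
    have : 2 - m < Real.sqrt (m ^ 2 + 4 * (ρ + lam0 - μ1) / σ) := by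
      apply Real.lt_sqrt_of_sq_lt
      have : 1 - m < (ρ + lam0 - μ1) / σ := by
        rw [lt_div_iff₀ hσ]; linarith
      have e : 4 * (ρ + lam0 - μ1) / σ = 4 * ((ρ + lam0 - μ1) / σ) := by ring
      rw [e]; nlinarith
    linarith
  have hkey : a1 * (γ2 - 1) < a0 * γ2 := by
    rw [ha0, ha1, div_mul_eq_mul_div, div_mul_eq_mul_div, div_lt_div_iff₀ hB hA]
    have e : γ2 * (ρ + lam0 - μ2) = (γ2 - 1) * (ρ + lam0 - μ1) + σ * γ2 * (γ2 - 1) := by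
      linear_combination -hgq - γ2 * hσm
    have : 0 < σ * γ2 * (γ2 - 1) := by
      apply mul_pos (by positivity); linarith
    nlinarith
  obtain ⟨x, rfl⟩ : ∃ x, δ1 = -x := ⟨-δ1, by ring⟩
  obtain ⟨y, rfl⟩ : ∃ y, δ3 = -y := ⟨-δ3, by ring⟩
  have hx0 : 0 < x := by linarith
  have hd : 0 < y - x := by linarith
  have hy0 : 0 < y := by linarith
  have hg0 : 0 < γ2 - 1 := by linarith
  have hgp : 0 < γ2 := by linarith
  rw [hk]
  apply mul_lt_mul_of_pos_right _ hβ
  have hD : 0 < (1 + η) * (-x * -y + γ2) - (-y + η * -x) * γ2 - (-x + η * -y)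
      - a1 * (γ2 - 1) * (-x - -y) := by
    have h1 : 0 < (1 - a1) * ((γ2 - 1) * (y - x)) := mul_pos (by linarith) (mul_pos hg0 hd)
    have h2 : 0 < (1 + η) * (x * y + γ2) + η * x * γ2 + x + η * y + (y - x) + x * γ2 := by
      positivity
    linear_combination h1 + h2
  rw [div_lt_div_iff₀ hD (by linarith)]
  have h1 : 0 < (y - x) * (η * γ2 + η * y + a0 * γ2 + (a0 * γ2 - a1 * (γ2 - 1)) * y) := by
    apply mul_pos hd
    have : 0 < (a0 * γ2 - a1 * (γ2 - 1)) * y := mul_pos (by linarith) hy0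
    positivity
  linear_combination h1
end

section
/- With b0 = (ρ−μ1)/(ρ+λ0−μ1) and b1 = (ρ−μ2)/(ρ+λ0−μ2), the strict inequality b1/b0 < (γ2/(γ2−1)) · (1 − 1/δ1) holds. -/
theorem stmt_7 (μ1 μ2 ρ σ lam0 b0 b1 m δ1 γ2 : ℝ)
    (hσ : 0 < σ) (hlam0 : 0 < lam0) (hμ1 : μ1 < ρ) (hμ2 : μ2 < ρ)
    (hm : m = 1 + (μ1 - μ2) / σ)
    (hb0 : b0 = (ρ - μ1) / (ρ + lam0 - μ1)) (hb1 : b1 = (ρ - μ2) / (ρ + lam0 - μ2))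
    (hδ1 : δ1 = (m - Real.sqrt (m ^ 2 + 4 * (ρ - μ1) / σ)) / 2)
    (hγ2 : γ2 = (m + Real.sqrt (m ^ 2 + 4 * (ρ + lam0 - μ1) / σ)) / 2) :
    b1 / b0 < γ2 / (γ2 - 1) * (1 - 1 / δ1) := by
  have key : ∀ a : ℝ, 0 < a → ∃ d e : ℝ, 0 < d ∧ 0 < e ∧ m = e - d ∧ a = σ * (d * e) ∧
      d = -((m - Real.sqrt (m ^ 2 + 4 * a / σ)) / 2) ∧
      e = (m + Real.sqrt (m ^ 2 + 4 * a / σ)) / 2 := by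
    intro a ha
    have hp : 0 < 4 * a / σ := by positivity
    have hs := Real.sq_sqrt (show 0 ≤ m ^ 2 + 4 * a / σ by positivity)
    have habs : |m| < Real.sqrt (m ^ 2 + 4 * a / σ) := by
      apply Real.lt_sqrt_of_sq_lt
      rw [sq_abs]; linarith
    have h12 := abs_lt.mp habs
    refine ⟨_, _, ?_, ?_, ?_, ?_, rfl, rfl⟩
    · linarith [h12.2]
    · linarith [h12.1]
    · ring
    · have h3 : σ * (4 * a / σ) = 4 * a := by field_simp
      linear_combination (-1 / 4) * h3 - σ / 4 * hs
  obtain ⟨d, e, hd, he, hmd, hA, hdd, -⟩ := key (ρ - μ1) (by linarith)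
  obtain ⟨g, c, hg, hc, hmg, hC, -, hcc⟩ := key (ρ + lam0 - μ1) (by linarith)
  have hδ : δ1 = -d := by rw [hδ1, hdd]; ring
  have hγ : γ2 = c := by rw [hγ2, hcc]
  have hmσ : σ * m = σ + (μ1 - μ2) := by rw [hm]; field_simp
  have hB : ρ - μ2 = σ * ((d + 1) * (e - 1)) := by
    rw [hmd] at hmσ; linear_combination hA - hmσ
  have hD : ρ + lam0 - μ2 = σ * ((g + 1) * (c - 1)) := by
    rw [hmg] at hmσ; linear_combination hC - hmσ
  have pos1 : ∀ x y : ℝ, 0 < x → 0 < σ * ((x + 1) * (y - 1)) → 0 < y - 1 := by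
    intro x y hx h
    have h1 := (mul_pos_iff_of_pos_left hσ).mp h
    exact (mul_pos_iff_of_pos_left (by linarith)).mp h1
  have he1 := pos1 d e hd (by linarith)
  have hc1 := pos1 g c hg (by linarith)
  have e1 : b1 / b0 = (c / (c - 1) * ((d + 1) / d)) * ((e - 1) / e * (g / (g + 1))) := by
    rw [hb1, hb0, hA, hB, hC, hD]
    field_simp
  have e2 : γ2 / (γ2 - 1) * (1 - 1 / δ1) = c / (c - 1) * ((d + 1) / d) := by
    rw [hδ, hγ]
    have : 1 - 1 / (-d) = (d + 1) / d := by field_simp; ring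
    rw [this]
  rw [e1, e2]
  apply mul_lt_of_lt_one_right (by positivity)
  have h1 : (e - 1) / e < 1 := by rw [div_lt_one he]; linarith
  have h2 : g / (g + 1) < 1 := by rw [div_lt_one (by linarith)]; linarith
  exact mul_lt_one_of_nonneg_of_lt_one_left (by positivity) h1 h2.le
end

section
/- With b0 = (ρ−μ1)/(ρ+λ0−μ1), b1 = (ρ−μ2)/(ρ+λ0−μ2), and η = λ0/λ1, the strict inequality (1+η−b1)/(1+η−b0) < ((1−δ3) γ2) / ((−δ3)(γ2−1)) holds. -/
theorem stmt_8 (μ1 μ2 ρ σ lam0 lam1 b0 b1 η m δ3 γ2 : ℝ)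
    (hσ : 0 < σ) (hlam0 : 0 < lam0) (hlam1 : 0 < lam1)
    (hμ1 : μ1 < ρ) (hμ2 : μ2 < ρ)
    (hm : m = 1 + (μ1 - μ2) / σ)
    (hb0 : b0 = (ρ - μ1) / (ρ + lam0 - μ1)) (hb1 : b1 = (ρ - μ2) / (ρ + lam0 - μ2))
    (hη : η = lam0 / lam1)
    (hδ3 : δ3 = (m - Real.sqrt (m ^ 2 + 4 * (ρ + lam0 + lam1 - μ1) / σ)) / 2)
    (hγ2 : γ2 = (m + Real.sqrt (m ^ 2 + 4 * (ρ + lam0 - μ1) / σ)) / 2) :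
    (1 + η - b1) / (1 + η - b0) < (1 - δ3) * γ2 / ((-δ3) * (γ2 - 1)) := by
  have hA0 : 0 < ρ + lam0 - μ1 := by linarith
  have hB0 : 0 < ρ + lam0 - μ2 := by linarith
  have hAL : 0 < ρ + lam0 + lam1 - μ1 := by linarith
  have hBL : 0 < ρ + lam0 + lam1 - μ2 := by linarith
  have hms : σ * m = σ + (μ1 - μ2) := by rw [hm]; field_simp
  -- roots of x ^ 2 - m x - c, for c > 0
  have key : ∀ c : ℝ, 0 < c → |m| < Real.sqrt (m ^ 2 + 4 * c / σ) ∧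
      σ * Real.sqrt (m ^ 2 + 4 * c / σ) ^ 2 = σ * m ^ 2 + 4 * c := by
    intro c hc
    have h4 : 0 < 4 * c / σ := by positivity
    constructor
    · rw [← Real.sqrt_sq_eq_abs]
      exact Real.sqrt_lt_sqrt (sq_nonneg m) (by linarith)
    · rw [Real.sq_sqrt (by positivity)]
      field_simp
  obtain ⟨k1, k2⟩ := key _ hA0
  obtain ⟨k3, k4⟩ := key _ hAL
  rw [abs_lt] at k1 k3
  set s := Real.sqrt (m ^ 2 + 4 * (ρ + lam0 - μ1) / σ)
  set t := Real.sqrt (m ^ 2 + 4 * (ρ + lam0 + lam1 - μ1) / σ)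
  clear_value s t
  obtain ⟨p, hp⟩ : ∃ p, p = γ2 - m := ⟨_, rfl⟩
  obtain ⟨d, hd⟩ : ∃ d, d = -δ3 := ⟨_, rfl⟩
  obtain ⟨q, hq⟩ : ∃ q, q = d + m := ⟨_, rfl⟩
  have hp0 : 0 < p := by linarith
  have hg0 : 0 < γ2 := by linarith
  have hd0 : 0 < d := by linarith
  have hq0 : 0 < q := by linarith
  have e1 : ρ + lam0 - μ1 = σ * (γ2 * p) := by
    rw [hp, hγ2]; linear_combination (-1/4) * k2
  have e2 : ρ + lam0 - μ2 = σ * ((γ2 - 1) * (p + 1)) := by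
    rw [hp] at e1 ⊢; linear_combination e1 - hms
  have e3 : ρ + lam0 + lam1 - μ1 = σ * (d * q) := by
    rw [hq, hd, hδ3]; linear_combination (-1/4) * k4
  have e4 : ρ + lam0 + lam1 - μ2 = σ * ((d + 1) * (q - 1)) := by
    rw [hq] at e3 ⊢; linear_combination e3 - hms
  have hg1 : 0 < γ2 - 1 := by
    have h := hB0
    rw [e2] at h
    exact pos_of_mul_pos_left (pos_of_mul_pos_right h hσ.le) (by linarith)
  have hq1 : 0 < q - 1 := by
    have h := hBL
    rw [e4] at h
    exact pos_of_mul_pos_right (pos_of_mul_pos_right h hσ.le) (by linarith)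
  have f1 : 1 + η - b1 = lam0 * (ρ + lam0 + lam1 - μ2) / (lam1 * (ρ + lam0 - μ2)) := by
    rw [hη, hb1]; field_simp; ring
  have f0 : 1 + η - b0 = lam0 * (ρ + lam0 + lam1 - μ1) / (lam1 * (ρ + lam0 - μ1)) := by
    rw [hη, hb0]; field_simp; ring
  have e : (1 + η - b1) / (1 + η - b0)
      = ((d + 1) * γ2 / (d * (γ2 - 1))) * (((q - 1) / q) * (p / (p + 1))) := by
    rw [f1, f0, e1, e2, e3, e4]
    field_simp
  have hr : (1 - δ3) * γ2 / ((-δ3) * (γ2 - 1)) = (d + 1) * γ2 / (d * (γ2 - 1)) := by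
    rw [hd]; ring
  rw [e, hr]
  apply mul_lt_of_lt_one_right (by positivity)
  have h1 : (q - 1) / q < 1 := by rw [div_lt_one hq0]; linarith
  have h2 : p / (p + 1) < 1 := by rw [div_lt_one (by linarith)]; linarith
  have h3 : 0 < (q - 1) / q := by positivity
  have h4 : 0 < p / (p + 1) := by positivity
  nlinarith
end

section
/- The strict inequality ((ρ+λ0+λ1−μ2)/(ρ−μ2)) · ((1−δ1)/(−δ1)) > ((ρ+λ0+λ1−μ1)/(ρ−μ1)) · ((1−δ3)/(−δ3)) holds. -/
theorem root_facts (σ m a s x : ℝ) (hσ : 0 < σ) (ha : 0 < a)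
    (hs : s = Real.sqrt (m ^ 2 + 4 * a / σ)) (hx : x = (s - m) / 2) :
    0 < x ∧ a = σ * (x * (x + m)) := by
  have h0 : 0 < 4 * a / σ := by positivity
  have h1 : s ^ 2 = m ^ 2 + 4 * a / σ := by
    rw [hs, Real.sq_sqrt (by positivity)]
  have h2 : m < s := by
    rw [hs]; apply Real.lt_sqrt_of_sq_lt; linarith
  refine ⟨by linarith, ?_⟩
  have h3 : x * (x + m) = a / σ := by
    have : x * (x + m) = (s ^ 2 - m ^ 2) / 4 := by rw [hx]; ring
    rw [this, h1]; ring
  rw [h3]; field_simp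

theorem stmt_9 (μ1 μ2 ρ σ lam0 lam1 m δ1 δ3 : ℝ)
    (hσ : 0 < σ) (hlam0 : 0 < lam0) (hlam1 : 0 < lam1)
    (hμ1 : μ1 < ρ) (hμ2 : μ2 < ρ)
    (hm : m = 1 + (μ1 - μ2) / σ)
    (hδ1 : δ1 = (m - Real.sqrt (m ^ 2 + 4 * (ρ - μ1) / σ)) / 2)
    (hδ3 : δ3 = (m - Real.sqrt (m ^ 2 + 4 * (ρ + lam0 + lam1 - μ1) / σ)) / 2) :
    (ρ + lam0 + lam1 - μ2) / (ρ - μ2) * ((1 - δ1) / (-δ1)) >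
      (ρ + lam0 + lam1 - μ1) / (ρ - μ1) * ((1 - δ3) / (-δ3)) := by
  obtain ⟨x, hx⟩ : ∃ x, x = -δ1 := ⟨_, rfl⟩
  obtain ⟨y, hy⟩ : ∃ y, y = -δ3 := ⟨_, rfl⟩
  obtain ⟨x0, ea⟩ := root_facts σ m (ρ - μ1) _ x hσ (by linarith) rfl (by rw [hx, hδ1]; ring)
  obtain ⟨y0, eA⟩ := root_facts σ m (ρ + lam0 + lam1 - μ1) _ y hσ (by linarith) rfl
    (by rw [hy, hδ3]; ring)
  have hd : μ1 - μ2 = σ * (m - 1) := by rw [hm]; field_simp; ring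
  have eb : ρ - μ2 = σ * ((x + 1) * (x + m - 1)) := by linear_combination ea + hd
  have eB : ρ + lam0 + lam1 - μ2 = σ * ((y + 1) * (y + m - 1)) := by linear_combination eA + hd
  have hp : 0 < x + m - 1 := by
    have h : 0 < σ * ((x + 1) * (x + m - 1)) := by linarith
    exact pos_of_mul_pos_right (pos_of_mul_pos_right h hσ.le) (by linarith)
  have hq : 0 < x + m := by linarith
  have hxy : x < y := by
    have h : σ * (x * (x + m)) < σ * (y * (y + m)) := by linarith
    have h' := lt_of_mul_lt_mul_left h hσ.le
    by_contra hc
    push Not at hc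
    nlinarith [mul_nonneg (sub_nonneg.2 hc) y0.le, mul_nonneg (sub_nonneg.2 hc) hq.le]
  have d1 : 1 - δ1 = 1 + x := by rw [hx]; ring
  have d3 : 1 - δ3 = 1 + y := by rw [hy]; ring
  rw [d1, d3, ← hx, ← hy, ea, eA, eb, eB]
  have l : σ * ((y + 1) * (y + m - 1)) / (σ * ((x + 1) * (x + m - 1))) * ((1 + x) / x)
      = (y + 1) / x * ((y + m - 1) / (x + m - 1)) := by
    have := hp.ne'
    have : x + 1 ≠ 0 := by positivity
    rw [add_comm 1 x]
    field_simp
  have r : σ * (y * (y + m)) / (σ * (x * (x + m))) * ((1 + y) / y)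
      = (y + 1) / x * ((y + m) / (x + m)) := by
    rw [add_comm 1 y]
    field_simp
  rw [l, r]
  apply mul_lt_mul_of_pos_left _ (by positivity)
  rw [div_lt_div_iff₀ hq hp]
  nlinarith
end

section
/- With B2 = (1+(μ1−μ2)/σ)² + 4(ρ−μ1)/σ and B3 = (1+(μ1−μ2)/σ)² + 4(ρ+λ0+λ1−μ1)/σ, the strict inequality (λ0+λ1) · (1 + (μ2−μ1)/σ + √B2) > (ρ−μ2) · (√B3 − √B2) holds. -/
theorem stmt_10 (μ1 μ2 ρ σ lam0 lam1 B2 B3 : ℝ)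
    (hσ : 0 < σ) (hlam0 : 0 < lam0) (hlam1 : 0 < lam1)
    (hμ1 : μ1 < ρ) (hμ2 : μ2 < ρ)
    (hB2 : B2 = (1 + (μ1 - μ2) / σ) ^ 2 + 4 * (ρ - μ1) / σ)
    (hB3 : B3 = (1 + (μ1 - μ2) / σ) ^ 2 + 4 * (ρ + lam0 + lam1 - μ1) / σ) :
    (lam0 + lam1) * (1 + (μ2 - μ1) / σ + Real.sqrt B2) >
      (ρ - μ2) * (Real.sqrt B3 - Real.sqrt B2) := by
  have hb : 0 < (ρ - μ2) / σ := div_pos (by linarith) hσ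
  have ha : 0 < (ρ - μ1) / σ := div_pos (by linarith) hσ
  have hL : 0 < (lam0 + lam1) / σ := div_pos (by linarith) hσ
  have e2 : B2 = (1 + (μ2 - μ1) / σ) ^ 2 + 4 * ((ρ - μ2) / σ) := by
    rw [hB2]; field_simp; ring
  have e3 : B3 = B2 + 4 * ((lam0 + lam1) / σ) := by
    rw [hB3, hB2]; field_simp; ring
  have h2 : 0 ≤ B2 := by rw [e2]; positivity
  have h3 : 0 ≤ B3 := by rw [e3]; positivity
  have s2 := Real.sq_sqrt h2
  have s3 := Real.sq_sqrt h3
  have hst : Real.sqrt B2 < Real.sqrt B3 := Real.sqrt_lt_sqrt h2 (by linarith)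
  have hs0 := Real.sqrt_nonneg B2
  have hbe : ρ - μ2 = σ * ((ρ - μ2) / σ) := by field_simp
  have hLe : lam0 + lam1 = σ * ((lam0 + lam1) / σ) := by field_simp
  rw [hbe, hLe]
  generalize Real.sqrt B2 = s at *
  generalize Real.sqrt B3 = t at *
  generalize 1 + (μ2 - μ1) / σ = c at *
  generalize (ρ - μ2) / σ = b at *
  generalize (lam0 + lam1) / σ = L at *
  have hc : 0 < c + s := by
    have : |c| < s := abs_lt_of_sq_lt_sq (by linarith) hs0
    linarith [(abs_lt.mp this).1]
  have eb : b = (s ^ 2 - c ^ 2) / 4 := by linarith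
  have eL : L = (t ^ 2 - s ^ 2) / 4 := by linarith
  have key : σ * L * (c + s) - σ * b * (t - s) = σ * ((t - s) * (c + s) * (t + c)) / 4 := by
    rw [eb, eL]; ring
  have h1 : 0 < t - s := by linarith
  have h4 : 0 < t + c := by linarith
  have : 0 < σ * ((t - s) * (c + s) * (t + c)) / 4 := by positivity
  linarith
end

section
/- For any real constants C1 and C3, with η = λ0/λ1, the functions w0(y) = C1 y^{δ1} − η C3 y^{δ3} and w1(y) = C1 y^{δ1} + C3 y^{δ3} satisfy, for all y in (0,∞), the coupled system (ρ+λ1) w1(y) − L w1(y) = λ1 w0(y) and (ρ+λ0) w0(y) − L w0(y) = λ0 w1(y), where L f(y) = σ y² f''(y) + (μ2−μ1) y f'(y) + μ1 f(y). -/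
theorem aux_deriv (A B a b : ℝ) (y : ℝ) (hy : 0 < y) :
    HasDerivAt (fun y : ℝ => A * y ^ a + B * y ^ b)
      ((A * a) * y ^ (a - 1) + (B * b) * y ^ (b - 1)) y := by
  have h1 := (Real.hasDerivAt_rpow_const (x := y) (p := a) (Or.inl hy.ne')).const_mul A
  have h2 := (Real.hasDerivAt_rpow_const (x := y) (p := b) (Or.inl hy.ne')).const_mul B
  exact (h1.add h2).congr_deriv (by ring)

theorem aux_euler (A B a b : ℝ) (w : ℝ → ℝ) (hw : ∀ y, w y = A * y ^ a + B * y ^ b)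
    (y : ℝ) (hy : 0 < y) :
    y * deriv w y = A * a * y ^ a + B * b * y ^ b ∧
    y ^ 2 * deriv (deriv w) y = A * a * (a - 1) * y ^ a + B * b * (b - 1) * y ^ b := by
  obtain rfl : w = fun y => A * y ^ a + B * y ^ b := funext hw
  have e : deriv (fun y : ℝ => A * y ^ a + B * y ^ b) =ᶠ[nhds y]
      fun y => (A * a) * y ^ (a - 1) + (B * b) * y ^ (b - 1) := by
    filter_upwards [lt_mem_nhds hy] with z hz
    exact (aux_deriv A B a b z hz).deriv
  rw [e.deriv_eq, (aux_deriv _ _ _ _ y hy).deriv, (aux_deriv _ _ _ _ y hy).deriv]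
  have k : ∀ c : ℝ, y ^ (c - 1) = y ^ c / y := fun c => Real.rpow_sub_one hy.ne' c
  simp only [k]
  constructor <;> field_simp

theorem aux_root (μ1 μ2 r σ m d : ℝ) (hσ : 0 < σ) (hr : 0 < r)
    (hm : m = 1 + (μ1 - μ2) / σ)
    (hd : d = (m - Real.sqrt (m ^ 2 + 4 * r / σ)) / 2) :
    σ * d * (d - 1) + (μ2 - μ1) * d = r := by
  have hs := Real.sq_sqrt (show 0 ≤ m ^ 2 + 4 * r / σ by positivity)
  have h1 : Real.sqrt (m ^ 2 + 4 * r / σ) = m - 2 * d := by rw [hd]; ring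
  rw [h1] at hs
  have h2 : σ * m = σ + (μ1 - μ2) := by rw [hm]; field_simp
  have h3 : σ * (4 * r / σ) = 4 * r := by field_simp
  linear_combination (σ / 4) * hs + h3 / 4 + d * h2

theorem stmt_12 (μ1 μ2 ρ σ lam0 lam1 η m δ1 δ3 C1 C3 : ℝ) (w0 w1 : ℝ → ℝ)
    (hσ : 0 < σ) (hlam0 : 0 < lam0) (hlam1 : 0 < lam1) (hμ1 : μ1 < ρ)
    (hm : m = 1 + (μ1 - μ2) / σ)
    (hη : η = lam0 / lam1)
    (hδ1 : δ1 = (m - Real.sqrt (m ^ 2 + 4 * (ρ - μ1) / σ)) / 2)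
    (hδ3 : δ3 = (m - Real.sqrt (m ^ 2 + 4 * (ρ + lam0 + lam1 - μ1) / σ)) / 2)
    (hw0 : ∀ y : ℝ, w0 y = C1 * y ^ δ1 - η * C3 * y ^ δ3)
    (hw1 : ∀ y : ℝ, w1 y = C1 * y ^ δ1 + C3 * y ^ δ3) :
    ∀ y : ℝ, 0 < y →
      (ρ + lam1) * w1 y -
          (σ * y ^ 2 * deriv (deriv w1) y + (μ2 - μ1) * y * deriv w1 y + μ1 * w1 y) =
        lam1 * w0 y ∧
      (ρ + lam0) * w0 y -
          (σ * y ^ 2 * deriv (deriv w0) y + (μ2 - μ1) * y * deriv w0 y + μ1 * w0 y) =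
        lam0 * w1 y := by
  intro y hy
  have r1 := aux_root μ1 μ2 (ρ - μ1) σ m δ1 hσ (by linarith) hm hδ1
  have r3 := aux_root μ1 μ2 (ρ + lam0 + lam1 - μ1) σ m δ3 hσ (by linarith) hm hδ3
  obtain ⟨a1, a2⟩ := aux_euler C1 C3 δ1 δ3 w1 hw1 y hy
  obtain ⟨b1, b2⟩ := aux_euler C1 (-(η * C3)) δ1 δ3 w0 (fun y => by rw [hw0]; ring) y hy
  have hη' : η * lam1 = lam0 := by rw [hη]; field_simp
  rw [hw0, hw1]
  constructor
  · linear_combination (-σ) * a2 - (μ2 - μ1) * a1 - C1 * y ^ δ1 * r1 - C3 * y ^ δ3 * r3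
      + C3 * y ^ δ3 * hη'
  · linear_combination (-σ) * b2 - (μ2 - μ1) * b1 - C1 * y ^ δ1 * r1 + η * C3 * y ^ δ3 * r3
      + C3 * y ^ δ3 * hη'
end

section
/- The threshold k and constants C1, C3, C2 satisfy the four smooth-fit equations: β_s − β_b k = C1 k^{δ1} + C3 k^{δ3}; −β_b k = C1 δ1 k^{δ1} + C3 δ3 k^{δ3}; C2 k^{γ2} + a0 β_s − a1 β_b k = C1 k^{δ1} − η C3 k^{δ3}; and C2 γ2 k^{γ2} − a1 β_b k = δ1 C1 k^{δ1} − η δ3 C3 k^{δ3}. -/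
theorem stmt_14 (μ1 μ2 ρ σ lam0 lam1 K βs βb η a0 a1 m δ1 δ3 γ2 k C1 C2 C3 : ℝ)
    (hσ : 0 < σ) (hlam0 : 0 < lam0) (hlam1 : 0 < lam1)
    (hμ1 : μ1 < ρ) (hμ2 : μ2 < ρ)
    (hm : m = 1 + (μ1 - μ2) / σ)
    (hK0 : 0 < K) (hK1 : K < 1) (hβs : βs = 1 - K) (hβb : βb = 1 + K)
    (hη : η = lam0 / lam1) (ha0 : a0 = lam0 / (ρ + lam0 - μ1)) (ha1 : a1 = lam0 / (ρ + lam0 - μ2))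
    (hδ1 : δ1 = (m - Real.sqrt (m ^ 2 + 4 * (ρ - μ1) / σ)) / 2)
    (hδ3 : δ3 = (m - Real.sqrt (m ^ 2 + 4 * (ρ + lam0 + lam1 - μ1) / σ)) / 2)
    (hγ2 : γ2 = (m + Real.sqrt (m ^ 2 + 4 * (ρ + lam0 - μ1) / σ)) / 2)
    (hk : k = (δ1 * δ3 * (1 + η) - (δ3 + η * δ1) * γ2 - a0 * (δ1 - δ3) * γ2) /
      ((1 + η) * (δ1 * δ3 + γ2) - (δ3 + η * δ1) * γ2 - (δ1 + η * δ3) - a1 * (γ2 - 1) * (δ1 - δ3)) *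
      (βs / βb))
    (hC1 : C1 = (-δ3 * βs + (δ3 - 1) * βb * k) / ((δ1 - δ3) * k ^ δ1))
    (hC3 : C3 = (δ1 * βs - (δ1 - 1) * βb * k) / ((δ1 - δ3) * k ^ δ3))
    (hC2 : C2 = ((1 - a0) * (η + a1) * (1 - δ1) * (-δ3) + (1 - a1) * (η + a0) * (1 - δ3) * δ1) * βs /
      (((1 + η) * (δ1 * δ3 + γ2) - δ1 * ((a1 + η) * γ2 + (1 - a1)) - δ3 * ((a1 + η) + γ2 * (1 - a1))) *
        k ^ γ2)) :
    βs - βb * k = C1 * k ^ δ1 + C3 * k ^ δ3 ∧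
      -(βb * k) = C1 * δ1 * k ^ δ1 + C3 * δ3 * k ^ δ3 ∧
      C2 * k ^ γ2 + a0 * βs - a1 * βb * k = C1 * k ^ δ1 - η * C3 * k ^ δ3 ∧
      C2 * γ2 * k ^ γ2 - a1 * βb * k = δ1 * C1 * k ^ δ1 - η * δ3 * C3 * k ^ δ3 := by
  have hβs0 : 0 < βs := by linarith
  have hβb0 : 0 < βb := by linarith
  have hη0 : 0 < η := by rw [hη]; positivity
  have hd0 : 0 < ρ + lam0 - μ1 := by linarith
  have hd1 : 0 < ρ + lam0 - μ2 := by linarith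
  have ha00 : 0 < a0 := by rw [ha0]; positivity
  have ha10 : 0 < a1 := by rw [ha1]; positivity
  have ha01 : 0 < 1 - a0 := by
    have : a0 < 1 := by rw [ha0, div_lt_one hd0]; linarith
    linarith
  have ha11 : 0 < 1 - a1 := by
    have : a1 < 1 := by rw [ha1, div_lt_one hd1]; linarith
    linarith
  have hp : 0 < 4 * (ρ - μ1) / σ := div_pos (by linarith) hσ
  have hδ1n : δ1 < 0 := by
    have : m < Real.sqrt (m ^ 2 + 4 * (ρ - μ1) / σ) := Real.lt_sqrt_of_sq_lt (by linarith)
    linarith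
  have hδ31 : δ3 < δ1 := by
    have : Real.sqrt (m ^ 2 + 4 * (ρ - μ1) / σ) <
        Real.sqrt (m ^ 2 + 4 * (ρ + lam0 + lam1 - μ1) / σ) := by
      apply Real.sqrt_lt_sqrt (by positivity)
      have : 4 * (ρ - μ1) / σ < 4 * (ρ + lam0 + lam1 - μ1) / σ :=
        div_lt_div_of_pos_right (by linarith) hσ
      linarith
    linarith
  have hγ1 : 1 < γ2 := by
    have : 2 - m < Real.sqrt (m ^ 2 + 4 * (ρ + lam0 - μ1) / σ) := by
      apply Real.lt_sqrt_of_sq_lt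
      have h1 : m ^ 2 + 4 * (ρ + lam0 - μ1) / σ - (2 - m) ^ 2 = 4 * (ρ + lam0 - μ2) / σ := by
        rw [hm]; field_simp; ring
      have h2 : 0 < 4 * (ρ + lam0 - μ2) / σ := by positivity
      linarith
    linarith
  clear hδ1 hδ3 hγ2 hm ha0 ha1 hη hp hβs hβb
  obtain ⟨p, hp⟩ : ∃ p, p = -δ1 := ⟨_, rfl⟩
  obtain ⟨q, hq⟩ : ∃ q, q = -δ3 := ⟨_, rfl⟩
  have hp0 : 0 < p := by linarith
  have hq0 : 0 < q := by linarith
  have hγ0 : 0 < γ2 := by linarith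
  have hN : 0 < δ1 * δ3 * (1 + η) - (δ3 + η * δ1) * γ2 - a0 * (δ1 - δ3) * γ2 := by
    have : 0 < p * q * (1 + η) + γ2 * (q * (1 - a0) + p * (η + a0)) := by positivity
    rw [hp, hq] at this
    nlinarith [this]
  have hD2 : 0 < (1 + η) * (δ1 * δ3 + γ2) - δ1 * ((a1 + η) * γ2 + (1 - a1))
      - δ3 * ((a1 + η) + γ2 * (1 - a1)) := by
    have : 0 < (1 + η) * (p * q + γ2) + p * ((a1 + η) * γ2 + (1 - a1))
      + q * ((a1 + η) + γ2 * (1 - a1)) := by positivity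
    rw [hp, hq] at this
    nlinarith [this]
  have hDD : (1 + η) * (δ1 * δ3 + γ2) - (δ3 + η * δ1) * γ2 - (δ1 + η * δ3)
      - a1 * (γ2 - 1) * (δ1 - δ3) = (1 + η) * (δ1 * δ3 + γ2) - δ1 * ((a1 + η) * γ2 + (1 - a1))
      - δ3 * ((a1 + η) + γ2 * (1 - a1)) := by ring
  rw [hDD] at hk
  clear hDD
  have hk0 : 0 < k := by
    rw [hk]; exact mul_pos (div_pos hN hD2) (div_pos hβs0 hβb0)
  have e1 : 0 < k ^ δ1 := Real.rpow_pos_of_pos hk0 _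
  have e3 : 0 < k ^ δ3 := Real.rpow_pos_of_pos hk0 _
  have e2 : 0 < k ^ γ2 := Real.rpow_pos_of_pos hk0 _
  have hdd : 0 < δ1 - δ3 := by linarith
  generalize hD : (1 + η) * (δ1 * δ3 + γ2) - δ1 * ((a1 + η) * γ2 + (1 - a1))
      - δ3 * ((a1 + η) + γ2 * (1 - a1)) = D at *
  have hU : C1 * k ^ δ1 = (-δ3 * βs + (δ3 - 1) * (βb * k)) / (δ1 - δ3) := by
    rw [hC1]; field_simp
  have hV : C3 * k ^ δ3 = (δ1 * βs - (δ1 - 1) * (βb * k)) / (δ1 - δ3) := by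
    rw [hC3]; field_simp
  have hX : C2 * k ^ γ2 = ((1 - a0) * (η + a1) * (1 - δ1) * (-δ3)
      + (1 - a1) * (η + a0) * (1 - δ3) * δ1) * βs / D := by
    rw [hC2]; field_simp
  have hy : βb * k = (δ1 * δ3 * (1 + η) - (δ3 + η * δ1) * γ2 - a0 * (δ1 - δ3) * γ2) * βs / D := by
    rw [hk]; field_simp
  obtain ⟨y, hyy⟩ : ∃ y, y = βb * k := ⟨_, rfl⟩
  rw [← hyy] at hU hV hy
  clear hk hC1 hC2 hC3
  have r1 : βs - y = C1 * k ^ δ1 + C3 * k ^ δ3 := by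
    rw [hU, hV]; field_simp; ring
  have r2 : -y = δ1 * (C1 * k ^ δ1) + δ3 * (C3 * k ^ δ3) := by
    rw [hU, hV]; field_simp; ring
  have r3 : C2 * k ^ γ2 + a0 * βs - a1 * y = C1 * k ^ δ1 - η * (C3 * k ^ δ3) := by
    rw [hU, hV, hX, hy]; field_simp; rw [← hD]; ring
  have r4 : γ2 * (C2 * k ^ γ2) - a1 * y = δ1 * (C1 * k ^ δ1) - η * δ3 * (C3 * k ^ δ3) := by
    rw [hU, hV, hX, hy]; field_simp; rw [← hD]; ring
  rw [hyy] at r1 r2 r3 r4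
  refine ⟨r1, ?_, ?_, ?_⟩ <;> linarith
end

section
/- (Theorem 4.1, solution of the HJB equations) Define w0(y) = C2 y^{γ2} + a0 β_s − a1 β_b y for 0 < y < k and w0(y) = C1 y^{δ1} − η C3 y^{δ3} for y ≥ k, and w1(y) = β_s − β_b y for 0 < y < k and w1(y) = C1 y^{δ1} + C3 y^{δ3} for y ≥ k. Then with L f(y) = σ y² f''(y) + (μ2−μ1) y f'(y) + μ1 f(y): for all y in (0,k), (ρ+λ0) w0(y) − L w0(y) = λ0 w1(y) and (ρ+λ1) w1(y) − L w1(y) ≥ λ1 w0(y) and w1(y) = β_s − β_b y; and for all y in (k,∞), (ρ+λ0) w0(y) − L w0(y) = λ0 w1(y), (ρ+λ1) w1(y) − L w1(y) = λ1 w0(y), and w1(y) ≥ β_s − β_b y. -/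
open Filter Topology in
/-- First two derivatives of a function which is locally a sum of two powers and an affine map. -/
theorem aux_deriv_s15 (w : ℝ → ℝ) (A a B b c d y : ℝ) (hy : 0 < y)
    (h : ∀ᶠ z in 𝓝 y, w z = A * z ^ a + B * z ^ b + c + d * z) :
    y * deriv w y = A * a * y ^ a + B * b * y ^ b + d * y ∧
    y ^ 2 * deriv (deriv w) y = A * (a * (a - 1)) * y ^ a + B * (b * (b - 1)) * y ^ b := by
  have hd : ∀ z : ℝ, 0 < z → HasDerivAt (fun z : ℝ => A * z ^ a + B * z ^ b + c + d * z)
      (A * (a * z ^ (a - 1)) + B * (b * z ^ (b - 1)) + d) z := by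
    intro z hz
    have h1 := (Real.hasDerivAt_rpow_const (x := z) (p := a) (Or.inl hz.ne')).const_mul A
    have h2 := (Real.hasDerivAt_rpow_const (x := z) (p := b) (Or.inl hz.ne')).const_mul B
    have h3 := (hasDerivAt_id z).const_mul d
    have h4 := ((h1.add h2).add_const c).add h3
    simp only [mul_one] at h4
    exact h4
  have hd2 : HasDerivAt (fun z : ℝ => A * (a * z ^ (a - 1)) + B * (b * z ^ (b - 1)) + d)
      (A * (a * ((a - 1) * y ^ (a - 1 - 1))) + B * (b * ((b - 1) * y ^ (b - 1 - 1)))) y := by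
    have h1 := ((Real.hasDerivAt_rpow_const (x := y) (p := a - 1)
      (Or.inl hy.ne')).const_mul a).const_mul A
    have h2 := ((Real.hasDerivAt_rpow_const (x := y) (p := b - 1)
      (Or.inl hy.ne')).const_mul b).const_mul B
    exact (h1.add h2).add_const d
  have e1 : deriv w y = A * (a * y ^ (a - 1)) + B * (b * y ^ (b - 1)) + d := by
    rw [EventuallyEq.deriv_eq h]
    exact (hd y hy).deriv
  have e2 : deriv (deriv w) y =
      A * (a * ((a - 1) * y ^ (a - 1 - 1))) + B * (b * ((b - 1) * y ^ (b - 1 - 1))) := by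
    have : ∀ᶠ z in 𝓝 y, deriv w z = A * (a * z ^ (a - 1)) + B * (b * z ^ (b - 1)) + d := by
      filter_upwards [h.eventually_nhds, lt_mem_nhds hy] with z hz hz0
      rw [EventuallyEq.deriv_eq hz]
      exact (hd z hz0).deriv
    rw [EventuallyEq.deriv_eq this]
    exact hd2.deriv
  simp only [e1, e2, Real.rpow_sub_one hy.ne']
  constructor <;> field_simp

theorem aux_root_s15 (m c : ℝ) (hc : 0 < c) :
    0 < (Real.sqrt (m ^ 2 + 4 * c) - m) / 2 ∧
    ((Real.sqrt (m ^ 2 + 4 * c) - m) / 2) * ((Real.sqrt (m ^ 2 + 4 * c) - m) / 2 + m) = c := by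
  have h := Real.sq_sqrt (show 0 ≤ m ^ 2 + 4 * c by positivity)
  constructor
  · have : m < Real.sqrt (m ^ 2 + 4 * c) := by
      apply Real.lt_sqrt_of_sq_lt; linarith
    linarith
  · nlinarith

theorem aux_tangent (k y p : ℝ) (hk : 0 < k) (hy : 0 < y) (hp : 0 < p) :
    k ^ (-p) * (1 - p * (y / k - 1)) ≤ y ^ (-p) := by
  have ht : 0 < y / k := by positivity
  have e : y ^ (-p) = k ^ (-p) * (y / k) ^ (-p) := by
    rw [← Real.mul_rpow hk.le ht.le]; congr 1; field_simp
  rw [e]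
  apply mul_le_mul_of_nonneg_left _ (by positivity)
  rw [Real.rpow_def_of_pos ht]
  have h1 := Real.add_one_le_exp (Real.log (y / k) * -p)
  have h2 := Real.log_le_sub_one_of_pos ht
  nlinarith

set_option maxHeartbeats 2000000 in
theorem stmt_15 (μ1 μ2 ρ σ lam0 lam1 K βs βb η a0 a1 m δ1 δ3 γ2 k C1 C2 C3 : ℝ)
    (w0 w1 : ℝ → ℝ)
    (hσ : 0 < σ) (hlam0 : 0 < lam0) (hlam1 : 0 < lam1)
    (hμ1 : μ1 < ρ) (hμ2 : μ2 < ρ)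
    (hm : m = 1 + (μ1 - μ2) / σ)
    (hK0 : 0 < K) (hK1 : K < 1) (hβs : βs = 1 - K) (hβb : βb = 1 + K)
    (hη : η = lam0 / lam1) (ha0 : a0 = lam0 / (ρ + lam0 - μ1)) (ha1 : a1 = lam0 / (ρ + lam0 - μ2))
    (hδ1 : δ1 = (m - Real.sqrt (m ^ 2 + 4 * (ρ - μ1) / σ)) / 2)
    (hδ3 : δ3 = (m - Real.sqrt (m ^ 2 + 4 * (ρ + lam0 + lam1 - μ1) / σ)) / 2)
    (hγ2 : γ2 = (m + Real.sqrt (m ^ 2 + 4 * (ρ + lam0 - μ1) / σ)) / 2)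
    (hk : k = (δ1 * δ3 * (1 + η) - (δ3 + η * δ1) * γ2 - a0 * (δ1 - δ3) * γ2) /
      ((1 + η) * (δ1 * δ3 + γ2) - (δ3 + η * δ1) * γ2 - (δ1 + η * δ3) - a1 * (γ2 - 1) * (δ1 - δ3)) *
      (βs / βb))
    (hC1 : C1 = (-δ3 * βs + (δ3 - 1) * βb * k) / ((δ1 - δ3) * k ^ δ1))
    (hC3 : C3 = (δ1 * βs - (δ1 - 1) * βb * k) / ((δ1 - δ3) * k ^ δ3))
    (hC2 : C2 = ((1 - a0) * (η + a1) * (1 - δ1) * (-δ3) + (1 - a1) * (η + a0) * (1 - δ3) * δ1) * βs /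
      (((1 + η) * (δ1 * δ3 + γ2) - δ1 * ((a1 + η) * γ2 + (1 - a1)) - δ3 * ((a1 + η) + γ2 * (1 - a1))) *
        k ^ γ2))
    (hw0 : ∀ y : ℝ, w0 y =
      if y < k then C2 * y ^ γ2 + a0 * βs - a1 * βb * y else C1 * y ^ δ1 - η * C3 * y ^ δ3)
    (hw1 : ∀ y : ℝ, w1 y =
      if y < k then βs - βb * y else C1 * y ^ δ1 + C3 * y ^ δ3) :
    (∀ y : ℝ, 0 < y → y < k →
      (ρ + lam0) * w0 y -
          (σ * y ^ 2 * deriv (deriv w0) y + (μ2 - μ1) * y * deriv w0 y + μ1 * w0 y) =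
        lam0 * w1 y ∧
      (ρ + lam1) * w1 y -
          (σ * y ^ 2 * deriv (deriv w1) y + (μ2 - μ1) * y * deriv w1 y + μ1 * w1 y) ≥
        lam1 * w0 y ∧
      w1 y = βs - βb * y) ∧
    (∀ y : ℝ, k < y →
      (ρ + lam0) * w0 y -
          (σ * y ^ 2 * deriv (deriv w0) y + (μ2 - μ1) * y * deriv w0 y + μ1 * w0 y) =
        lam0 * w1 y ∧
      (ρ + lam1) * w1 y -
          (σ * y ^ 2 * deriv (deriv w1) y + (μ2 - μ1) * y * deriv w1 y + μ1 * w1 y) =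
        lam1 * w0 y ∧
      w1 y ≥ βs - βb * y) := by
  have hm1 : 0 < ρ - μ1 := by linarith
  obtain ⟨hp, hp2⟩ := aux_root_s15 m ((ρ - μ1) / σ) (by positivity)
  obtain ⟨hr, hr2⟩ := aux_root_s15 m ((ρ + lam0 - μ1) / σ) (div_pos (by linarith) hσ)
  obtain ⟨hq, hq2⟩ := aux_root_s15 m ((ρ + lam0 + lam1 - μ1) / σ) (div_pos (by linarith) hσ)
  rw [← mul_div_assoc] at hp hp2 hr hr2 hq hq2
  obtain ⟨p, hpd⟩ : ∃ p, p = (Real.sqrt (m ^ 2 + 4 * (ρ - μ1) / σ) - m) / 2 := ⟨_, rfl⟩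
  obtain ⟨r, hrd⟩ : ∃ p, p = (Real.sqrt (m ^ 2 + 4 * (ρ + lam0 - μ1) / σ) - m) / 2 := ⟨_, rfl⟩
  obtain ⟨q, hqd⟩ : ∃ p, p = (Real.sqrt (m ^ 2 + 4 * (ρ + lam0 + lam1 - μ1) / σ) - m) / 2 :=
    ⟨_, rfl⟩
  rw [← hpd] at hp hp2
  rw [← hrd] at hr hr2
  rw [← hqd] at hq hq2
  have hδ1' : δ1 = -p := by rw [hδ1, hpd]; ring
  have hδ3' : δ3 = -q := by rw [hδ3, hqd]; ring
  have hmr : m = γ2 - r := by rw [hγ2, hrd]; ring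
  clear hδ1 hδ3 hγ2 hpd hrd hqd
  subst hδ1' hδ3'
  rw [eq_div_iff hσ.ne'] at hp2 hr2 hq2
  have hσm : σ * m = σ + μ1 - μ2 := by rw [hm]; field_simp; ring
  clear hm
  subst hmr
  have hγ : 0 < γ2 := by
    have : 0 < r * γ2 := by nlinarith
    exact pos_of_mul_pos_right this hr.le
  -- parametrisation of the data by p, q, r, γ2
  have el0 : lam0 = σ * ((r - p) * (γ2 + p)) := by linear_combination hp2 - hr2
  have el1 : lam1 = σ * ((q - r) * (γ2 + q)) := by linear_combination hr2 - hq2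
  have hpr : p < r := by
    have : 0 < σ * (γ2 + p) * (r - p) := by linarith [el0, mul_comm (σ * (γ2 + p)) (r - p)]
    linarith [pos_of_mul_pos_right this (by positivity)]
  have hrq : r < q := by
    have : 0 < σ * (γ2 + q) * (q - r) := by linarith
    linarith [pos_of_mul_pos_right this (by positivity)]
  have ed1 : ρ + lam0 - μ2 = σ * ((1 + r) * (γ2 - 1)) := by linear_combination - hσm - hr2
  have hγ1 : 0 < γ2 - 1 := by
    have : 0 < σ * (1 + r) * (γ2 - 1) := by linarith
    exact pos_of_mul_pos_right this (by positivity)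
  have ed0 : ρ + lam0 - μ1 = σ * (r * γ2) := by linear_combination - hr2
  have u : 0 < r - p := by linarith
  have v : 0 < q - r := by linarith
  have uv : 0 < q - p := by linarith
  have eη : η = (r - p) * (γ2 + p) / ((q - r) * (γ2 + q)) := by
    rw [hη, el0, el1, mul_div_mul_left _ _ hσ.ne']
  have ea0 : a0 = (r - p) * (γ2 + p) / (r * γ2) := by
    rw [ha0, ed0, el0, mul_div_mul_left _ _ hσ.ne']
  have ea1 : a1 = (r - p) * (γ2 + p) / ((1 + r) * (γ2 - 1)) := by
    rw [ha1, ed1, el0, mul_div_mul_left _ _ hσ.ne']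
  have hβs0 : 0 < βs := by linarith
  have hβb0 : 0 < βb := by linarith
  have eN : -p * -q * (1 + η) - (-q + η * -p) * γ2 - a0 * (-p - -q) * γ2 =
      p * q * (p + γ2) * (q - p) / (r * (q - r)) := by
    rw [eη, ea0]; field_simp; ring
  have eD : (1 + η) * (-p * -q + γ2) - (-q + η * -p) * γ2 - (-p + η * -q)
      - a1 * (γ2 - 1) * (-p - -q) =
      (1 + p) * (1 + q) * (p + γ2) * (q - p) / ((1 + r) * (q - r)) := by
    rw [eη, ea1]; field_simp; ring
  have eD' : (1 + η) * (-p * -q + γ2) - -p * ((a1 + η) * γ2 + (1 - a1))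
      - -q * ((a1 + η) + γ2 * (1 - a1)) =
      (1 + p) * (1 + q) * (p + γ2) * (q - p) / ((1 + r) * (q - r)) := by
    rw [← eD]; ring
  have eM : (1 - a0) * (η + a1) * (1 - -p) * (- -q) + (1 - a1) * (η + a0) * (1 - -q) * -p =
      (r - p) * (γ2 + p) / ((q - r) * (γ2 + q)) * (p * q * (1 + p) * (1 + q) * (q - p)) /
        (r * γ2 * (1 + r) * (γ2 - 1)) := by
    rw [eη, ea0, ea1]; field_simp; ring
  rw [eN, eD] at hk
  have ek : βb * k = βs * (p * q * (1 + r) / (r * (1 + p) * (1 + q))) := by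
    rw [hk]; field_simp
  have hk0 : 0 < k := by rw [hk]; positivity
  have hkp : 0 < k ^ (-p) := by positivity
  have hkq : 0 < k ^ (-q) := by positivity
  have hkγ : 0 < k ^ γ2 := by positivity
  rw [eM, eD'] at hC2
  have eC2 : C2 * k ^ γ2 = βs * (p * q * (r - p) / (r * γ2 * (γ2 - 1) * (γ2 + q))) := by
    rw [hC2]; field_simp; ring
  have hC2p : 0 < C2 := by
    have : 0 < C2 * k ^ γ2 := by rw [eC2]; positivity
    exact pos_of_mul_pos_left this hkγ.le
  have hqp : -p - -q ≠ 0 := by linarith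
  have ec1 : C1 * k ^ (-p) * (q - p) = q * βs - (1 + q) * (βb * k) := by
    rw [hC1]; field_simp; ring
  have ec3 : C3 * k ^ (-q) * (q - p) = -p * βs + (1 + p) * (βb * k) := by
    rw [hC3]; field_simp; ring
  have hC1p : 0 ≤ C1 * k ^ (-p) := by
    have : C1 * k ^ (-p) * (q - p) = βs * (q * (r - p) / (r * (1 + p))) := by
      rw [ec1, ek]; field_simp; ring
    have h2 : 0 ≤ C1 * k ^ (-p) * (q - p) := by rw [this]; positivity
    exact nonneg_of_mul_nonneg_left h2 uv
  have hC3p : 0 ≤ C3 * k ^ (-q) := by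
    have : C3 * k ^ (-q) * (q - p) = βs * (p * (q - r) / (r * (1 + q))) := by
      rw [ec3, ek]; field_simp; ring
    have h2 : 0 ≤ C3 * k ^ (-q) * (q - p) := by rw [this]; positivity
    exact nonneg_of_mul_nonneg_left h2 uv
  have hC1n : 0 ≤ C1 := nonneg_of_mul_nonneg_left hC1p hkp
  have hC3n : 0 ≤ C3 := nonneg_of_mul_nonneg_left hC3p hkq
  have eηl : η * lam1 = lam0 := by rw [hη]; field_simp
  have ea0l : a0 * (ρ + lam0 - μ1) = lam0 := by
    rw [ha0]; exact div_mul_cancel₀ _ (by linarith)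
  have ea1l : a1 * (ρ + lam0 - μ2) = lam0 := by
    rw [ha1]; exact div_mul_cancel₀ _ (by linarith)
  have ha1lt : a1 < 1 := by
    rw [ha1, div_lt_one (by linarith)]; linarith
  refine ⟨?_, ?_⟩
  · intro y hy hyk
    have v0 : w0 y = C2 * y ^ γ2 + a0 * βs - a1 * βb * y := by rw [hw0, if_pos hyk]
    have v1 : w1 y = βs - βb * y := by rw [hw1, if_pos hyk]
    obtain ⟨d1, d2⟩ := aux_deriv_s15 w0 C2 γ2 0 0 (a0 * βs) (-(a1 * βb)) y hy (by
      filter_upwards [gt_mem_nhds hyk] with z hz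
      rw [hw0, if_pos hz]; ring)
    obtain ⟨d3, d4⟩ := aux_deriv_s15 w1 0 0 0 0 βs (-βb) y hy (by
      filter_upwards [gt_mem_nhds hyk] with z hz
      rw [hw1, if_pos hz]; ring)
    refine ⟨?_, ?_, v1⟩
    · rw [v0, v1]
      linear_combination (-σ) * d2 - (μ2 - μ1) * d1 + βs * ea0l - βb * y * ea1l
        - C2 * y ^ γ2 * hr2 - C2 * y ^ γ2 * γ2 * hσm
    · have hmono : y ^ γ2 ≤ k ^ γ2 := Real.rpow_le_rpow hy.le hyk.le hγ.le
      have h1 : C2 * y ^ γ2 ≤ C2 * k ^ γ2 := mul_le_mul_of_nonneg_left hmono hC2p.le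
      have gk : (ρ + lam1 - μ1 - lam1 * a0) * βs - (ρ + lam1 - μ2 - lam1 * a1) * (βb * k)
          - lam1 * (C2 * k ^ γ2) = σ * βs * (p * q / r) := by
        have e1 : ρ + lam1 - μ1 = σ * (p * (p + γ2 - r) + (q - r) * (γ2 + q)) := by
          linear_combination el1 - hp2
        have e2 : ρ + lam1 - μ2 =
            σ * ((1 + p) * (p + γ2 - r - 1) + (q - r) * (γ2 + q)) := by
          linear_combination el1 - hp2 - hσm
        rw [e1, e2, ek, eC2, ea0, ea1, el1]
        field_simp
        ring
      have hgk : 0 < σ * βs * (p * q / r) := by positivity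
      have hc : 0 ≤ (ρ + lam1 - μ2 - lam1 * a1) * βb * (k - y) := by
        have : 0 < ρ + lam1 - μ2 - lam1 * a1 := by
          linarith [mul_lt_mul_of_pos_left ha1lt hlam1]
        have : 0 < k - y := by linarith
        positivity
      have h2 := mul_le_mul_of_nonneg_left h1 hlam1.le
      have e3 : σ * y ^ 2 * deriv (deriv w1) y = 0 := by
        linear_combination σ * d4
      have e4 : (μ2 - μ1) * y * deriv w1 y = (μ2 - μ1) * (-βb * y) := by
        linear_combination (μ2 - μ1) * d3
      rw [e3, e4, v0, v1]
      linarith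
  · intro y hky
    have hy : 0 < y := hk0.trans hky
    have v0 : w0 y = C1 * y ^ (-p) - η * C3 * y ^ (-q) := by rw [hw0, if_neg hky.le.not_gt]
    have v1 : w1 y = C1 * y ^ (-p) + C3 * y ^ (-q) := by rw [hw1, if_neg hky.le.not_gt]
    obtain ⟨d1, d2⟩ := aux_deriv_s15 w0 C1 (-p) (-(η * C3)) (-q) 0 0 y hy (by
      filter_upwards [lt_mem_nhds hky] with z hz
      rw [hw0, if_neg hz.le.not_gt]; ring)
    obtain ⟨d3, d4⟩ := aux_deriv_s15 w1 C1 (-p) C3 (-q) 0 0 y hy (by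
      filter_upwards [lt_mem_nhds hky] with z hz
      rw [hw1, if_neg hz.le.not_gt]; ring)
    refine ⟨?_, ?_, ?_⟩
    · rw [v0, v1]
      linear_combination (-σ) * d2 - (μ2 - μ1) * d1 - C1 * y ^ (-p) * hp2
        + C1 * y ^ (-p) * p * hσm + η * C3 * y ^ (-q) * hq2 - η * C3 * y ^ (-q) * q * hσm
        + C3 * y ^ (-q) * eηl
    · rw [v0, v1]
      linear_combination (-σ) * d4 - (μ2 - μ1) * d3 - C1 * y ^ (-p) * hp2
        + C1 * y ^ (-p) * p * hσm - C3 * y ^ (-q) * hq2 + C3 * y ^ (-q) * q * hσm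
        + C3 * y ^ (-q) * eηl
    · rw [v1]
      have t1 := mul_le_mul_of_nonneg_left (aux_tangent k y p hk0 hy hp) hC1n
      have t3 := mul_le_mul_of_nonneg_left (aux_tangent k y q hk0 hy hq) hC3n
      have s0 : C1 * k ^ (-p) + C3 * k ^ (-q) = βs - βb * k := by
        apply mul_right_cancel₀ uv.ne'
        linear_combination ec1 + ec3
      have s1 : p * (C1 * k ^ (-p)) + q * (C3 * k ^ (-q)) = βb * k := by
        apply mul_right_cancel₀ uv.ne'
        linear_combination p * ec1 + q * ec3
      have hyk : βb * k * (y / k) = βb * y := by field_simp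
      have : C1 * (k ^ (-p) * (1 - p * (y / k - 1))) + C3 * (k ^ (-q) * (1 - q * (y / k - 1)))
          = βs - βb * y := by
        linear_combination s0 - (y / k - 1) * s1 - hyk
      linarith
end

section
/- Let C1 > 0, C3 > 0, δ1 < 0, δ3 < 0, β_b > 0, β_s be real numbers and k > 0. Define φ(y) = C1 y^{δ1} + C3 y^{δ3} − β_s + β_b y on (0,∞). If φ(k) = 0 and φ'(k) = 0, then φ(y) > 0 for all y > k. -/
theorem stmt_16 (C1 C3 δ1 δ3 βs βb k : ℝ) (φ : ℝ → ℝ)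
    (hC1 : 0 < C1) (hC3 : 0 < C3) (hδ1 : δ1 < 0) (hδ3 : δ3 < 0)
    (hβb : 0 < βb) (hk : 0 < k)
    (hφ : ∀ y : ℝ, φ y = C1 * y ^ δ1 + C3 * y ^ δ3 - βs + βb * y)
    (hφk : φ k = 0) (hφ'k : deriv φ k = 0) :
    ∀ y : ℝ, k < y → 0 < φ y := by
  intro y hy
  have hd : ∀ x : ℝ, 0 < x →
      HasDerivAt φ (C1 * (δ1 * x ^ (δ1 - 1)) + C3 * (δ3 * x ^ (δ3 - 1)) + βb * 1) x := by
    intro x hx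
    have e : φ = fun y => C1 * y ^ δ1 + C3 * y ^ δ3 - βs + βb * y := funext hφ
    rw [e]
    exact ((((Real.hasDerivAt_rpow_const (Or.inl hx.ne')).const_mul C1).add
      ((Real.hasDerivAt_rpow_const (Or.inl hx.ne')).const_mul C3)).sub_const βs).add
      ((hasDerivAt_id x).const_mul βb)
  obtain ⟨c, hc, h⟩ := exists_hasDerivAt_eq_slope φ _ hy
    (fun x hx => (hd x (hk.trans_le hx.1)).continuousAt.continuousWithinAt)
    (fun x hx => hd x (hk.trans hx.1))
  have h0 := (hd k hk).deriv
  rw [hφ'k] at h0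
  have h1 : c ^ (δ1 - 1) < k ^ (δ1 - 1) :=
    Real.rpow_lt_rpow_of_neg hk hc.1 (by linarith)
  have h3 : c ^ (δ3 - 1) < k ^ (δ3 - 1) :=
    Real.rpow_lt_rpow_of_neg hk hc.1 (by linarith)
  have g1 := mul_lt_mul_of_pos_left (mul_lt_mul_of_neg_left h1 hδ1) hC1
  have g3 := mul_lt_mul_of_pos_left (mul_lt_mul_of_neg_left h3 hδ3) hC3
  have hp : 0 < (φ y - φ k) / (y - k) := by rw [← h]; linarith
  rw [hφk, sub_zero] at hp
  exact (div_pos_iff_of_pos_right (sub_pos.2 hy)).1 hp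
end

section
/- The function ψ(y) = [ρ + (1−a0)λ1 − μ1] β_s − [ρ + (1−a1)λ1 − μ2] β_b y − λ1 C2 y^{γ2} is nonnegative for all y in [0, k]. -/
/-- The key algebraic evaluations, in terms of the root parameters. -/
lemma stmt_17_alg (x y s r σ l0 l1 η a0 a1 : ℝ) (hx : 0 < x) (hy : 0 < y) (hs : 0 < s) (hr : 0 < r)
    (hσ : 0 < σ) (hl0 : l0 = σ * (s * (x + (y + 1) + s)))
    (hl1 : l1 = σ * (r * (x + (y + 1) + 2 * s + r)))
    (hη : η = l0 / l1) (ha0 : a0 = l0 / (σ * ((y + 1 + s) * (x + s))))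
    (ha1 : a1 = l0 / (σ * ((y + s) * (x + s + 1)))) (δ1 δ3 γ : ℝ)
    (h1 : δ1 = -x) (h3 : δ3 = -(x + s + r)) (hγ : γ = y + 1 + s) :
    (δ1 * δ3 * (1 + η) - (δ3 + η * δ1) * γ - a0 * (δ1 - δ3) * γ =
      x * (x + s + r) * (r + s) * (y + 1 + s + x) / (r * (x + s))) ∧
    ((1 + η) * (δ1 * δ3 + γ) - (δ3 + η * δ1) * γ - (δ1 + η * δ3) - a1 * (γ - 1) * (δ1 - δ3) =
      (x + 1) * (x + s + r + 1) * (r + s) * (y + 1 + s + x) / (r * (x + s + 1))) ∧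
    ((1 - a0) * (η + a1) * (1 - δ1) * (-δ3) + (1 - a1) * (η + a0) * (1 - δ3) * δ1 =
      η * (x * (x + s + r) * (1 + x) * (1 + x + s + r) * (s + r)) /
        ((y + 1 + s) * (x + s) * (y + s) * (x + s + 1))) := by
  have e0 : a0 = 1 - x * (y + 1) / ((y + 1 + s) * (x + s)) := by
    rw [ha0, hl0]; field_simp; ring
  have e1 : a1 = 1 - (x + 1) * y / ((y + s) * (x + s + 1)) := by
    rw [ha1, hl0]; field_simp; ring
  have eη : η = s * (x + (y + 1) + s) / (r * (x + (y + 1) + 2 * s + r)) := by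
    rw [hη, hl0, hl1]; field_simp
  refine ⟨?_, ?_, ?_⟩
  · rw [e0, eη, h1, h3, hγ]; field_simp; ring
  · rw [e1, eη, h1, h3, hγ]; field_simp; ring
  · rw [e0, e1, eη, h1, h3]; field_simp; ring

lemma stmt_17_root (m c : ℝ) (hc : 0 < c) :
    m < Real.sqrt (m ^ 2 + 4 * c) ∧ -m < Real.sqrt (m ^ 2 + 4 * c) := by
  constructor <;> apply Real.lt_sqrt_of_sq_lt <;> nlinarith

set_option maxHeartbeats 2000000 in
theorem stmt_17 (μ1 μ2 ρ σ lam0 lam1 K βs βb η a0 a1 m δ1 δ3 γ2 k C2 : ℝ) (ψ : ℝ → ℝ)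
    (hσ : 0 < σ) (hlam0 : 0 < lam0) (hlam1 : 0 < lam1)
    (hμ1 : μ1 < ρ) (hμ2 : μ2 < ρ)
    (hm : m = 1 + (μ1 - μ2) / σ)
    (hK0 : 0 < K) (hK1 : K < 1) (hβs : βs = 1 - K) (hβb : βb = 1 + K)
    (hη : η = lam0 / lam1) (ha0 : a0 = lam0 / (ρ + lam0 - μ1)) (ha1 : a1 = lam0 / (ρ + lam0 - μ2))
    (hδ1 : δ1 = (m - Real.sqrt (m ^ 2 + 4 * (ρ - μ1) / σ)) / 2)
    (hδ3 : δ3 = (m - Real.sqrt (m ^ 2 + 4 * (ρ + lam0 + lam1 - μ1) / σ)) / 2)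
    (hγ2 : γ2 = (m + Real.sqrt (m ^ 2 + 4 * (ρ + lam0 - μ1) / σ)) / 2)
    (hk : k = (δ1 * δ3 * (1 + η) - (δ3 + η * δ1) * γ2 - a0 * (δ1 - δ3) * γ2) /
      ((1 + η) * (δ1 * δ3 + γ2) - (δ3 + η * δ1) * γ2 - (δ1 + η * δ3) - a1 * (γ2 - 1) * (δ1 - δ3)) *
      (βs / βb))
    (hC2 : C2 = ((1 - a0) * (η + a1) * (1 - δ1) * (-δ3) + (1 - a1) * (η + a0) * (1 - δ3) * δ1) * βs /
      (((1 + η) * (δ1 * δ3 + γ2) - δ1 * ((a1 + η) * γ2 + (1 - a1)) - δ3 * ((a1 + η) + γ2 * (1 - a1))) *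
        k ^ γ2))
    (hψ : ∀ y : ℝ, ψ y =
      (ρ + (1 - a0) * lam1 - μ1) * βs - (ρ + (1 - a1) * lam1 - μ2) * βb * y -
        lam1 * C2 * y ^ γ2) :
    ∀ y : ℝ, 0 ≤ y → y ≤ k → 0 ≤ ψ y := by
  intro t ht0 htk
  have hβs0 : 0 < βs := by linarith
  have hβb0 : 0 < βb := by linarith
  obtain ⟨p, hp⟩ : ∃ p, p = (ρ - μ1) / σ := ⟨_, rfl⟩
  obtain ⟨l, hl⟩ : ∃ l, l = lam0 / σ := ⟨_, rfl⟩
  obtain ⟨n, hn⟩ : ∃ n, n = lam1 / σ := ⟨_, rfl⟩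
  have hp0 : 0 < p := by rw [hp]; exact div_pos (by linarith) hσ
  have hl0 : 0 < l := by rw [hl]; positivity
  have hn0 : 0 < n := by rw [hn]; positivity
  have hpe : ρ - μ1 = σ * p := by rw [hp]; field_simp
  have hle : lam0 = σ * l := by rw [hl]; field_simp
  have hne : lam1 = σ * n := by rw [hn]; field_simp
  have hqe : ρ - μ2 = σ * (p + m - 1) := by rw [hp, hm]; field_simp; ring
  have hq0 : 0 < p + m - 1 := by
    by_contra h
    have : ρ - μ2 ≤ 0 := by rw [hqe]; exact mul_nonpos_of_nonneg_of_nonpos hσ.le (by linarith)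
    linarith
  have i1 : 4 * (ρ - μ1) / σ = 4 * p := by rw [hp]; ring
  have i2 : 4 * (ρ + lam0 - μ1) / σ = 4 * (p + l) := by rw [hp, hl]; ring
  have i3 : 4 * (ρ + lam0 + lam1 - μ1) / σ = 4 * (p + l + n) := by rw [hp, hl, hn]; ring
  rw [i1] at hδ1
  rw [i2] at hγ2
  rw [i3] at hδ3
  obtain ⟨b1, b1'⟩ := stmt_17_root m p hp0
  have q1 : Real.sqrt (m ^ 2 + 4 * p) ^ 2 = m ^ 2 + 4 * p := Real.sq_sqrt (by positivity)
  have q2 : Real.sqrt (m ^ 2 + 4 * (p + l)) ^ 2 = m ^ 2 + 4 * (p + l) :=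
    Real.sq_sqrt (by positivity)
  have q3 : Real.sqrt (m ^ 2 + 4 * (p + l + n)) ^ 2 = m ^ 2 + 4 * (p + l + n) :=
    Real.sq_sqrt (by positivity)
  have c1 : Real.sqrt (m ^ 2 + 4 * p) < Real.sqrt (m ^ 2 + 4 * (p + l)) :=
    Real.sqrt_lt_sqrt (by positivity) (by linarith)
  have c2 : Real.sqrt (m ^ 2 + 4 * (p + l)) < Real.sqrt (m ^ 2 + 4 * (p + l + n)) :=
    Real.sqrt_lt_sqrt (by positivity) (by linarith)
  have c3 : 2 - m < Real.sqrt (m ^ 2 + 4 * p) :=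
    Real.lt_sqrt_of_sq_lt (by nlinarith)
  generalize Real.sqrt (m ^ 2 + 4 * p) = S1 at *
  generalize Real.sqrt (m ^ 2 + 4 * (p + l)) = S2 at *
  generalize Real.sqrt (m ^ 2 + 4 * (p + l + n)) = S3 at *
  obtain ⟨x, hx⟩ : ∃ x, x = (S1 - m) / 2 := ⟨_, rfl⟩
  obtain ⟨y, hy⟩ : ∃ y, y = (S1 + m) / 2 - 1 := ⟨_, rfl⟩
  obtain ⟨s, hs⟩ : ∃ s, s = (S2 - S1) / 2 := ⟨_, rfl⟩
  obtain ⟨r, hr⟩ : ∃ r, r = (S3 - S2) / 2 := ⟨_, rfl⟩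
  have hx0 : 0 < x := by linarith
  have hy0 : 0 < y := by linarith
  have hs0 : 0 < s := by linarith
  have hr0 : 0 < r := by linarith
  have d1 : δ1 = -x := by linarith
  have d3 : δ3 = -(x + s + r) := by linarith
  have dg : γ2 = y + 1 + s := by linarith
  have ep : p = x * (y + 1) := by rw [hx, hy]; linarith only [q1]
  have em : m = y + 1 - x := by linarith
  have el : l = s * (x + (y + 1) + s) := by rw [hx, hy, hs]; linarith only [q1, q2]
  have en : n = r * (x + (y + 1) + 2 * s + r) := by
    rw [hx, hy, hs, hr]; linarith only [q2, q3]
  have f1 : ρ - μ1 = σ * (x * (y + 1)) := by rw [hpe, ep]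
  have f2 : ρ - μ2 = σ * ((x + 1) * y) := by rw [hqe, ep, em]; ring
  have f3 : lam0 = σ * (s * (x + (y + 1) + s)) := by rw [hle, el]
  have f4 : lam1 = σ * (r * (x + (y + 1) + 2 * s + r)) := by rw [hne, en]
  have g0 : ρ + lam0 - μ1 = σ * ((y + 1 + s) * (x + s)) := by
    linear_combination f1 + f3
  have g1 : ρ + lam0 - μ2 = σ * ((y + s) * (x + s + 1)) := by
    linear_combination f2 + f3
  rw [g0] at ha0
  rw [g1] at ha1
  obtain ⟨A1, A2, A3⟩ := stmt_17_alg x y s r σ lam0 lam1 η a0 a1 hx0 hy0 hs0 hr0 hσ f3 f4 hη ha0 ha1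
    δ1 δ3 γ2 d1 d3 dg
  have A4 : (1 + η) * (δ1 * δ3 + γ2) - δ1 * ((a1 + η) * γ2 + (1 - a1))
      - δ3 * ((a1 + η) + γ2 * (1 - a1)) =
      (x + 1) * (x + s + r + 1) * (r + s) * (y + 1 + s + x) / (r * (x + s + 1)) := by
    rw [← A2]; ring
  rw [A1, A2] at hk
  rw [A3, A4] at hC2
  have hk' : k = x * (x + s + r) * (x + s + 1) * βs /
      ((x + 1) * (x + s + r + 1) * (x + s) * βb) := by
    rw [hk]; field_simp
  have hk0 : 0 < k := by rw [hk']; positivity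
  have hkg : 0 < k ^ γ2 := Real.rpow_pos_of_pos hk0 _
  have hη0 : 0 < η := by rw [hη]; positivity
  have hC0 : 0 ≤ C2 := by rw [hC2]; positivity
  have hD : lam1 * C2 * k ^ γ2 =
      σ * βs * x * (x + s + r) * s * r / ((y + 1 + s) * (x + s) * (y + s)) := by
    rw [hC2]
    generalize k ^ γ2 = G at hkg
    rw [hη, f3, f4]; field_simp; ring
  have e0 : a0 = 1 - x * (y + 1) / ((y + 1 + s) * (x + s)) := by
    rw [ha0, f3]; field_simp; ring
  have e1 : a1 = 1 - (x + 1) * y / ((y + s) * (x + s + 1)) := by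
    rw [ha1, f3]; field_simp; ring
  have hA : ρ + (1 - a0) * lam1 - μ1 =
      σ * x * (y + 1) * (x + s + r) * (y + 1 + s + r) / ((y + 1 + s) * (x + s)) := by
    have : ρ + (1 - a0) * lam1 - μ1 = σ * (x * (y + 1)) + (1 - a0) * lam1 := by
      linear_combination f1
    rw [this, e0, f4]; field_simp; ring
  have hB : ρ + (1 - a1) * lam1 - μ2 =
      σ * (x + 1) * y * (x + s + r + 1) * (y + s + r) / ((y + s) * (x + s + 1)) := by
    have : ρ + (1 - a1) * lam1 - μ2 = σ * ((x + 1) * y) + (1 - a1) * lam1 := by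
      linear_combination f2
    rw [this, e1, f4]; field_simp; ring
  have hB0 : 0 ≤ (ρ + (1 - a1) * lam1 - μ2) * βb := by rw [hB]; positivity
  have hBk : (ρ + (1 - a1) * lam1 - μ2) * βb * k =
      σ * y * (y + s + r) * x * (x + s + r) * βs / ((y + s) * (x + s)) := by
    rw [hB, hk']; field_simp
  have hend : (ρ + (1 - a0) * lam1 - μ1) * βs - (ρ + (1 - a1) * lam1 - μ2) * βb * k -
        lam1 * C2 * k ^ γ2 = σ * βs * x * (x + s + r) / (x + s) := by
    rw [hD, hBk, hA]; field_simp; ring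
  have hend0 : 0 ≤ σ * βs * x * (x + s + r) / (x + s) := by positivity
  have m1 := mul_le_mul_of_nonneg_left htk hB0
  have hγ0 : 0 ≤ γ2 := by rw [dg]; positivity
  have m2 := mul_le_mul_of_nonneg_left (Real.rpow_le_rpow ht0 htk hγ0)
    (mul_nonneg hlam1.le hC0)
  rw [hψ]
  linarith only [m1, m2, hend, hend0]
end

section
/- Viewing the threshold k = k(λ0, λ1) as a function of λ0 with λ1 and all other parameters fixed, k(λ0, λ1) tends to k0 := (−δ1/(1−δ1)) · (β_s/β_b) as λ0 → ∞ (limit along the filter atTop). -/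
open Filter Topology

lemma aux_sqrt (C B : ℝ) :
    Tendsto (fun l : ℝ => Real.sqrt (C + B * l) / Real.sqrt l) atTop (𝓝 (Real.sqrt B)) := by
  have h : Tendsto (fun l : ℝ => Real.sqrt (C * l⁻¹ + B)) atTop (𝓝 (Real.sqrt (C * 0 + B))) :=
    ((tendsto_inv_atTop_zero.const_mul C).add_const B).sqrt
  rw [mul_zero, zero_add] at h
  refine h.congr' ?_
  filter_upwards [eventually_gt_atTop 0] with l hl
  rw [← Real.sqrt_div' _ hl.le]
  congr 1
  field_simp

lemma aux_frac (c : ℝ) : Tendsto (fun l : ℝ => l / (c + l)) atTop (𝓝 1) := by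
  have h : Tendsto (fun l : ℝ => (c * l⁻¹ + 1)⁻¹) atTop (𝓝 ((c * 0 + 1)⁻¹)) :=
    ((tendsto_inv_atTop_zero.const_mul c).add_const 1).inv₀ (by norm_num)
  have e : (c * 0 + 1)⁻¹ = (1 : ℝ) := by norm_num
  rw [e] at h
  refine h.congr' ?_
  filter_upwards [eventually_gt_atTop 0, eventually_gt_atTop (-c)] with l hl hc
  have : c + l ≠ 0 := by linarith
  have h2 : c * l⁻¹ + 1 = (c + l) / l := by field_simp
  rw [h2, inv_div]

theorem stmt_18 (μ1 μ2 ρ σ lam1 K βs βb m δ1 : ℝ)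
    (η a0 a1 δ3 γ2 kf : ℝ → ℝ)
    (hσ : 0 < σ) (hlam1 : 0 < lam1) (hμ1 : μ1 < ρ) (hμ2 : μ2 < ρ)
    (hK0 : 0 < K) (hK1 : K < 1) (hβs : βs = 1 - K) (hβb : βb = 1 + K)
    (hm : m = 1 + (μ1 - μ2) / σ)
    (hδ1 : δ1 = (m - Real.sqrt (m ^ 2 + 4 * (ρ - μ1) / σ)) / 2)
    (hη : ∀ l : ℝ, 0 < l → η l = l / lam1)
    (ha0 : ∀ l : ℝ, 0 < l → a0 l = l / (ρ + l - μ1))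
    (ha1 : ∀ l : ℝ, 0 < l → a1 l = l / (ρ + l - μ2))
    (hδ3 : ∀ l : ℝ, 0 < l → δ3 l = (m - Real.sqrt (m ^ 2 + 4 * (ρ + l + lam1 - μ1) / σ)) / 2)
    (hγ2 : ∀ l : ℝ, 0 < l → γ2 l = (m + Real.sqrt (m ^ 2 + 4 * (ρ + l - μ1) / σ)) / 2)
    (hk : ∀ l : ℝ, 0 < l → kf l =
      (δ1 * δ3 l * (1 + η l) - (δ3 l + η l * δ1) * γ2 l - a0 l * (δ1 - δ3 l) * γ2 l) /
        ((1 + η l) * (δ1 * δ3 l + γ2 l) - (δ3 l + η l * δ1) * γ2 l - (δ1 + η l * δ3 l) -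
          a1 l * (γ2 l - 1) * (δ1 - δ3 l)) *
        (βs / βb)) :
    Filter.Tendsto kf Filter.atTop (nhds (-δ1 / (1 - δ1) * (βs / βb))) := by
  have he : Tendsto (fun l : ℝ => (Real.sqrt l)⁻¹) atTop (𝓝 0) :=
    tendsto_inv_atTop_zero.comp Real.tendsto_sqrt_atTop
  set c := Real.sqrt (4 / σ) with hc
  have hcpos : 0 < c := Real.sqrt_pos.mpr (by positivity)
  have hδneg : δ1 < 0 := by
    have hp : 0 < 4 * (ρ - μ1) / σ := div_pos (by linarith) hσ
    have : m < Real.sqrt (m ^ 2 + 4 * (ρ - μ1) / σ) := by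
      apply Real.lt_sqrt_of_sq_lt
      linarith
    linarith
  have hD : Tendsto (fun l => δ3 l * (Real.sqrt l)⁻¹) atTop (𝓝 (-c / 2)) := by
    have h := ((he.const_mul m).sub
      (aux_sqrt (m ^ 2 + 4 * (ρ + lam1 - μ1) / σ) (4 / σ))).div_const 2
    rw [mul_zero, zero_sub] at h
    refine h.congr' ?_
    filter_upwards [eventually_gt_atTop 0] with l hl
    rw [hδ3 l hl, show m ^ 2 + 4 * (ρ + l + lam1 - μ1) / σ
      = m ^ 2 + 4 * (ρ + lam1 - μ1) / σ + 4 / σ * l by ring]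
    ring
  have hG : Tendsto (fun l => γ2 l * (Real.sqrt l)⁻¹) atTop (𝓝 (c / 2)) := by
    have h := ((he.const_mul m).add
      (aux_sqrt (m ^ 2 + 4 * (ρ - μ1) / σ) (4 / σ))).div_const 2
    rw [mul_zero, zero_add] at h
    refine h.congr' ?_
    filter_upwards [eventually_gt_atTop 0] with l hl
    rw [hγ2 l hl, show m ^ 2 + 4 * (ρ + l - μ1) / σ
      = m ^ 2 + 4 * (ρ - μ1) / σ + 4 / σ * l by ring]
    ring
  have hA0 : Tendsto a0 atTop (𝓝 1) := by
    refine (aux_frac (ρ - μ1)).congr' ?_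
    filter_upwards [eventually_gt_atTop 0] with l hl
    rw [ha0 l hl, show ρ + l - μ1 = ρ - μ1 + l by ring]
  have hA1 : Tendsto a1 atTop (𝓝 1) := by
    refine (aux_frac (ρ - μ2)).congr' ?_
    filter_upwards [eventually_gt_atTop 0] with l hl
    rw [ha1 l hl, show ρ + l - μ2 = ρ - μ2 + l by ring]
  have hE := (he.pow 2).add_const (1 / lam1)
  have hF := (hD.mul he).add_const (δ1 / lam1)
  have hH := (he.const_mul δ1).sub hD
  have hN := (((hD.const_mul δ1).mul hE).sub (hF.mul hG)).sub (((hA0.mul hH).mul hG).mul he)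
  have hM := (((hE.mul ((hD.const_mul δ1).add hG)).sub (hF.mul hG)).sub
    (((he.pow 3).const_mul δ1).add (hD.div_const lam1))).sub
      (((hA1.mul (hG.sub he)).mul hH).mul he)
  have h1 : (1 - δ1) ≠ 0 := by linarith
  have hval : (0 ^ 2 + 1 / lam1) * (δ1 * (-c / 2) + c / 2) - (-c / 2 * 0 + δ1 / lam1) * (c / 2)
      - (δ1 * 0 ^ 3 + -c / 2 / lam1) - 1 * (c / 2 - 0) * (δ1 * 0 - -c / 2) * 0
      = c * (1 - δ1) / lam1 := by
    field_simp
    ring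
  have hR := (hN.div hM (by
    rw [hval]
    exact div_ne_zero (mul_ne_zero hcpos.ne' h1) hlam1.ne')).mul_const (βs / βb)
  rw [hval] at hR
  have hval2 : (δ1 * (-c / 2) * (0 ^ 2 + 1 / lam1) - (-c / 2 * 0 + δ1 / lam1) * (c / 2)
      - 1 * (δ1 * 0 - -c / 2) * (c / 2) * 0) / (c * (1 - δ1) / lam1) = -δ1 / (1 - δ1) := by
    have := hcpos.ne'
    field_simp
    ring
  rw [hval2] at hR
  refine hR.congr' ?_
  filter_upwards [eventually_gt_atTop 0] with l hl
  have hs : 0 < Real.sqrt l := Real.sqrt_pos.mpr hl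
  have hη' : η l = Real.sqrt l ^ 2 / lam1 := by rw [hη l hl, Real.sq_sqrt hl.le]
  rw [hk l hl, hη']
  congr 1
  have hs3 : (Real.sqrt l)⁻¹ ^ 3 ≠ 0 := pow_ne_zero _ (inv_ne_zero hs.ne')
  refine Eq.trans ?_ (mul_div_mul_right _ _ hs3)
  simp only [Pi.div_apply]
  congr 1 <;> (field_simp)
end

section
/- Viewing the threshold k = k(λ0, λ1) as a function of λ1 with λ0 and all other parameters fixed, k(λ0, λ1) tends to k1 := [−δ1 + γ2(1−a0)] / [1 − δ1 + (γ2−1)(1−a1)] · (β_s/β_b) as λ1 → ∞ (limit along the filter atTop); moreover k1 > k0 := (−δ1/(1−δ1)) · (β_s/β_b). -/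
theorem stmt_19 (μ1 μ2 ρ σ lam0 K βs βb a0 a1 m δ1 γ2 : ℝ)
    (η δ3 kf : ℝ → ℝ)
    (hσ : 0 < σ) (hlam0 : 0 < lam0) (hμ1 : μ1 < ρ) (hμ2 : μ2 < ρ)
    (hK0 : 0 < K) (hK1 : K < 1) (hβs : βs = 1 - K) (hβb : βb = 1 + K)
    (ha0 : a0 = lam0 / (ρ + lam0 - μ1)) (ha1 : a1 = lam0 / (ρ + lam0 - μ2))
    (hm : m = 1 + (μ1 - μ2) / σ)
    (hδ1 : δ1 = (m - Real.sqrt (m ^ 2 + 4 * (ρ - μ1) / σ)) / 2)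
    (hγ2 : γ2 = (m + Real.sqrt (m ^ 2 + 4 * (ρ + lam0 - μ1) / σ)) / 2)
    (hη : ∀ l : ℝ, 0 < l → η l = lam0 / l)
    (hδ3 : ∀ l : ℝ, 0 < l → δ3 l = (m - Real.sqrt (m ^ 2 + 4 * (ρ + lam0 + l - μ1) / σ)) / 2)
    (hk : ∀ l : ℝ, 0 < l → kf l =
      (δ1 * δ3 l * (1 + η l) - (δ3 l + η l * δ1) * γ2 - a0 * (δ1 - δ3 l) * γ2) /
        ((1 + η l) * (δ1 * δ3 l + γ2) - (δ3 l + η l * δ1) * γ2 - (δ1 + η l * δ3 l) -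
          a1 * (γ2 - 1) * (δ1 - δ3 l)) *
        (βs / βb)) :
    Filter.Tendsto kf Filter.atTop
        (nhds ((-δ1 + γ2 * (1 - a0)) / (1 - δ1 + (γ2 - 1) * (1 - a1)) * (βs / βb))) ∧
      (-δ1 + γ2 * (1 - a0)) / (1 - δ1 + (γ2 - 1) * (1 - a1)) * (βs / βb) >
        -δ1 / (1 - δ1) * (βs / βb) := by
  have hA : 0 < ρ - μ1 := by linarith
  have hB : 0 < ρ - μ2 := by linarith
  have hmσ : m * σ = σ + (μ1 - μ2) := by rw [hm]; field_simp
  have hp1 : 0 < 4 * (ρ - μ1) / σ := by positivity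
  have hp2 : 0 < 4 * (ρ + lam0 - μ1) / σ := by
    apply div_pos _ hσ; linarith
  have s1 : m ^ 2 < (Real.sqrt (m ^ 2 + 4 * (ρ - μ1) / σ)) ^ 2 := by
    rw [Real.sq_sqrt (by positivity)]; linarith
  have s2 : m ^ 2 < (Real.sqrt (m ^ 2 + 4 * (ρ + lam0 - μ1) / σ)) ^ 2 := by
    rw [Real.sq_sqrt (by positivity)]; linarith
  have b1 := abs_lt.1 (abs_lt_of_sq_lt_sq s1 (Real.sqrt_nonneg _))
  have b2 := abs_lt.1 (abs_lt_of_sq_lt_sq s2 (Real.sqrt_nonneg _))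
  have e1 : σ * (δ1 * (δ1 - m)) = ρ - μ1 := by
    have h := Real.sq_sqrt (show 0 ≤ m ^ 2 + 4 * (ρ - μ1) / σ by positivity)
    have h2 : δ1 * (δ1 - m) = (ρ - μ1) / σ := by
      rw [hδ1]; linear_combination h / 4
    rw [h2]; field_simp
  have e2 : σ * (γ2 * (γ2 - m)) = ρ + lam0 - μ1 := by
    have h := Real.sq_sqrt (show 0 ≤ m ^ 2 + 4 * (ρ + lam0 - μ1) / σ by positivity)
    have h2 : γ2 * (γ2 - m) = (ρ + lam0 - μ1) / σ := by
      rw [hγ2]; linear_combination h / 4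
    rw [h2]; field_simp
  have hd : δ1 < 0 := by rw [hδ1]; linarith [b1.2]
  have he : 0 < m - δ1 := by rw [hδ1]; linarith [b1.1]
  have hg : 0 < γ2 := by rw [hγ2]; linarith [b2.1]
  have hh : 0 < γ2 - m := by rw [hγ2]; linarith [b2.2]
  have e1' : σ * ((1 - δ1) * (m - δ1 - 1)) = ρ - μ2 := by
    linear_combination e1 + hmσ
  have e2' : σ * ((γ2 - 1) * (1 + (γ2 - m))) = ρ + lam0 - μ2 := by
    linear_combination e2 + hmσ
  have hg1 : 0 < γ2 - 1 := by
    have : 0 < (γ2 - 1) * (σ * (1 + (γ2 - m))) := by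
      have : (γ2 - 1) * (σ * (1 + (γ2 - m))) = ρ + lam0 - μ2 := by
        linear_combination e2'
      linarith
    exact (pos_iff_pos_of_mul_pos this).2 (by positivity)
  have hh1 : 0 < 1 + (γ2 - m) := by linarith
  have q0 : γ2 * (1 - a0) = (ρ - μ1) / (σ * (γ2 - m)) := by
    have : 1 - a0 = (ρ - μ1) / (σ * (γ2 * (γ2 - m))) := by
      rw [ha0, e2]
      have : ρ + lam0 - μ1 ≠ 0 := by linarith
      field_simp; ring
    rw [this]; field_simp
  have q1 : (γ2 - 1) * (1 - a1) = (ρ - μ2) / (σ * (1 + (γ2 - m))) := by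
    have : 1 - a1 = (ρ - μ2) / (σ * ((γ2 - 1) * (1 + (γ2 - m)))) := by
      rw [ha1, e2']
      have : ρ + lam0 - μ2 ≠ 0 := by linarith
      field_simp; ring
    rw [this]; field_simp
  have hq1 : 0 < (γ2 - 1) * (1 - a1) := by rw [q1]; positivity
  have hD : 0 < 1 - δ1 + (γ2 - 1) * (1 - a1) := by linarith
  constructor
  · have hη0 : Filter.Tendsto η Filter.atTop (nhds 0) := by
      have : Filter.Tendsto (fun l : ℝ => lam0 / l) Filter.atTop (nhds 0) :=
        Filter.Tendsto.div_atTop tendsto_const_nhds Filter.tendsto_id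
      refine this.congr' ?_
      filter_upwards [Filter.eventually_gt_atTop 0] with l hl
      exact (hη l hl).symm
    have hbot : Filter.Tendsto δ3 Filter.atTop Filter.atBot := by
      have t1 : Filter.Tendsto (fun l : ℝ => m ^ 2 + 4 * (ρ + lam0 + l - μ1) / σ)
          Filter.atTop Filter.atTop := by
        have t0 : Filter.Tendsto (fun l : ℝ => (m ^ 2 + 4 * (ρ + lam0 - μ1) / σ) + (4 / σ) * l)
            Filter.atTop Filter.atTop :=
          Filter.tendsto_atTop_add_const_left _ _
            (Filter.Tendsto.const_mul_atTop (by positivity) Filter.tendsto_id)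
        refine t0.congr ?_
        intro l; ring
      have t2 := Real.tendsto_sqrt_atTop.comp t1
      have t3 : Filter.Tendsto (fun l : ℝ => m / 2 +
          (-(1 / 2)) * Real.sqrt (m ^ 2 + 4 * (ρ + lam0 + l - μ1) / σ))
          Filter.atTop Filter.atBot :=
        Filter.tendsto_atBot_add_const_left _ _
          (Filter.Tendsto.const_mul_atTop_of_neg (by norm_num) t2)
      refine t3.congr' ?_
      filter_upwards [Filter.eventually_gt_atTop 0] with l hl
      rw [hδ3 l hl]; ring
    have hu : Filter.Tendsto (fun l => (δ3 l)⁻¹) Filter.atTop (nhds 0) :=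
      tendsto_inv_atBot_zero.comp hbot
    let F : ℝ × ℝ → ℝ := fun p =>
      (δ1 * (1 + p.1) - (1 + p.1 * δ1 * p.2) * γ2 - a0 * (δ1 * p.2 - 1) * γ2) /
        ((1 + p.1) * (δ1 + γ2 * p.2) - (1 + p.1 * δ1 * p.2) * γ2 - (δ1 * p.2 + p.1) -
          a1 * (γ2 - 1) * (δ1 * p.2 - 1)) * (βs / βb)
    have hF : ContinuousAt F (0, 0) := by
      refine ContinuousAt.mul (ContinuousAt.div (by fun_prop) (by fun_prop) ?_) (by fun_prop)
      have : δ1 - γ2 + a1 * (γ2 - 1) ≠ 0 := by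
        intro h; nlinarith
      intro h
      apply this
      simp only at h
      linear_combination h
    have hF0 : F (0, 0) =
        (-δ1 + γ2 * (1 - a0)) / (1 - δ1 + (γ2 - 1) * (1 - a1)) * (βs / βb) := by
      simp only [F]
      rw [← neg_div_neg_eq]
      congr 2 <;> ring
    rw [← hF0]
    refine (hF.tendsto.comp (hη0.prodMk_nhds hu)).congr' ?_
    filter_upwards [Filter.eventually_gt_atTop 0, hbot.eventually_lt_atBot 0] with l hl hl3
    have h3 : δ3 l ≠ 0 := hl3.ne
    have hi : (δ3 l)⁻¹ * δ3 l = 1 := inv_mul_cancel₀ h3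
    rw [hk l hl]
    simp only [F, Function.comp]
    rw [← mul_div_mul_right _ _ h3]
    generalize (δ3 l)⁻¹ = u at *
    congr 2
    · linear_combination (-η l * δ1 * γ2 - a0 * δ1 * γ2) * hi
    · linear_combination ((1 + η l) * γ2 - η l * δ1 * γ2 - δ1 - a1 * (γ2 - 1) * δ1) * hi
  · have hβ : 0 < βs / βb := by
      rw [hβs, hβb]; apply div_pos <;> linarith
    refine mul_lt_mul_of_pos_right ?_ hβ
    rw [div_lt_div_iff₀ (by linarith) hD]
    have key : -δ1 * ((γ2 - 1) * (1 - a1)) < γ2 * (1 - a0) * (1 - δ1) := by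
      rw [q0, q1, ← e1, ← e1', ← sub_pos]
      have : σ * (δ1 * (δ1 - m)) / (σ * (γ2 - m)) * (1 - δ1) -
          -δ1 * (σ * ((1 - δ1) * (m - δ1 - 1)) / (σ * (1 + (γ2 - m)))) =
          (-δ1) * (1 - δ1) * ((m - δ1) + (γ2 - m)) / ((γ2 - m) * (1 + (γ2 - m))) := by
        field_simp; ring
      rw [this]
      have : 0 < -δ1 := by linarith
      have : 0 < 1 - δ1 := by linarith
      positivity
    linarith
end
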